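/- Under the Bessel semigroup evolution Ψ_t(r) := −log P_t^b(e^{-Ψ})(r) with Ψ convex, non-decreasing, superlinear, Ψ(0)=0, the Legendre transform satisfies the evolution equation ∂_t(LΨ_t)(r) = −1/(LΨ_t)''(r) + r² − (n−1)·r/(LΨ_t)'(r) for r > 0. -/

import Mathlib

open Set MeasureTheory Filter

/-- The Bessel semigroup `P_t^b`, the projection of the heat semigroup on `ℝⁿ`
onto radial functions: `P_t^b g (r) = (g̃ * g_t)(x)` for any `x` with `‖x‖ = r`. -/
noncomputable def besselSemigroup (n : ℕ) [NeZero n] (t : ℝ) (g : ℝ → ℝ) (r : ℝ) : ℝ :=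
  ∫ y : EuclideanSpace ℝ (Fin n),
    Real.exp (-‖EuclideanSpace.single (0 : Fin n) r - y‖ ^ 2 / (4 * t)) /
        (4 * Real.pi * t) ^ ((n : ℝ) / 2) * g ‖y‖

/-- The evolved potential `Ψ_t = −log P_t^b (e^{-Ψ})`. -/
noncomputable def evolvedPotential (n : ℕ) [NeZero n] (Ψ : ℝ → ℝ) (t r : ℝ) : ℝ :=
  - Real.log (besselSemigroup n t (fun s => Real.exp (-Ψ s)) r)

/-- The one-dimensional Legendre transform `LΨ_t(r) = sup_{s>0} (rs − Ψ_t(s))`. -/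
noncomputable def legendreEvolved (n : ℕ) [NeZero n] (Ψ : ℝ → ℝ) (t r : ℝ) : ℝ :=
  ⨆ s : Set.Ioi (0 : ℝ), (r * (s : ℝ) - evolvedPotential n Ψ t s)

/-! By the envelope theorem, the time derivative of the Legendre transform at `r` is `-∂_t Ψ_t` at
the point `s` where `Ψ_t' s = r`. This `s` is the `r`-derivative of the transform, with
`r`-derivative `1 / Ψ_t'' s`, so the claim is the equation
`∂_t Ψ_t = -Ψ_t'² + Ψ_t'' + (n - 1) Ψ_t' / s`.

Expanding the square in the heat kernel writes `Ψ_t` through the log-moment generating function of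
the rotation invariant measure `exp (-Ψ ‖y‖) dy` tilted by `exp (⟪y, v⟫ - b ‖y‖²)`, `b = 1 / (4 t)`.
The mean of the tilt is parallel to `v`. Differentiating this relation in `v` expresses the
transverse second moments through the mean, which gives the equation.

The point `s` exists because `Ψ_t` is superlinear and `Ψ_t' 0 = 0`. It is unique because
`Ψ_t'' > 0`, that is, because the variance of `⟪y, e⟫` along the tilt axis `e` is less than the
Gaussian value `1 / (2 b)`. In polar coordinates, an integration by parts turns the gap into the
integral of a flux against `Ψ'`. Up to a multiple of the centred density, which has integral zero,
the integrand is a positive variance on each sphere plus a term which is nonnegative by Chebyshev's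
correlation inequality, since both `Ψ'` and the spherical mean are increasing.
-/

open Real Topology
open scoped RealInnerProductSpace

section ExponentialFamily

variable {X V F G : Type*} [MeasurableSpace X] {μ : Measure X}
  [NormedAddCommGroup V] [NormedSpace ℝ V] [NormedAddCommGroup F] [NormedSpace ℝ F]
  [NormedAddCommGroup G] [NormedSpace ℝ G] {T : X → V →L[ℝ] ℝ} {P : X → F} {Q : X → G} {θ : V}

/-- The parameter `θ` lies in the open domain of convergence of the exponential family
`θ ↦ ∫ exp (T x θ) • P x ∂μ` with sufficient statistic `T` and weight `P`: the integral still
converges after adding a small multiple of `‖T x‖` to the exponent. -/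
def IntegrableExpAt (μ : Measure X) (T : X → V →L[ℝ] ℝ) (P : X → F) (θ : V) : Prop :=
  ∃ ε > 0, Integrable (fun x => exp (T x θ + ε * ‖T x‖) • P x) μ

namespace IntegrableExpAt

theorem aestronglyMeasurable_weight (h : IntegrableExpAt μ T P θ)
    (hT : AEStronglyMeasurable T μ) : AEStronglyMeasurable P μ := by
  obtain ⟨ε, -, hint⟩ := h
  have hexp : AEStronglyMeasurable (fun x => exp (-(T x θ + ε * ‖T x‖))) μ :=
    continuous_exp.comp_aestronglyMeasurable
      ((hT.apply_continuousLinearMap θ).add (hT.norm.const_mul ε)).neg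
  refine (hexp.smul hint.aestronglyMeasurable).congr (.of_forall fun x => ?_)
  simp [smul_smul, ← exp_add]

theorem of_exp_mul_norm_le (hT : AEStronglyMeasurable T μ) (hP : AEStronglyMeasurable P μ) {ε : ℝ}
    (hε : 0 < ε) {bound : X → ℝ} (hbound : Integrable bound μ)
    (hle : ∀ᵐ x ∂μ, exp (T x θ + ε * ‖T x‖) * ‖P x‖ ≤ bound x) : IntegrableExpAt μ T P θ := by
  refine ⟨ε, hε, hbound.mono' ((continuous_exp.comp_aestronglyMeasurable
    ((hT.apply_continuousLinearMap θ).add (hT.norm.const_mul ε))).smul hP)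
    (hle.mono fun x hx => ?_)⟩
  rwa [norm_smul, norm_of_nonneg (exp_pos _).le]

theorem of_norm_le (h : IntegrableExpAt μ T P θ) (hT : AEStronglyMeasurable T μ)
    (hQ : AEStronglyMeasurable Q μ) {C : ℝ} (hC : ∀ x, ‖Q x‖ ≤ C * ‖T x‖ * ‖P x‖) :
    IntegrableExpAt μ T Q θ := by
  obtain ⟨ε, hε, hint⟩ := h
  refine of_exp_mul_norm_le hT hQ (half_pos hε) (hint.norm.const_mul (|C| * (2 / ε)))
    (.of_forall fun x => ?_)
  have hT_le : ‖T x‖ ≤ 2 / ε * exp (ε / 2 * ‖T x‖) := by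
    rw [div_mul_eq_mul_div, le_div_iff₀ hε]
    linarith [add_one_le_exp (ε / 2 * ‖T x‖)]
  have hQ_le : ‖Q x‖ ≤ |C| * (2 / ε * exp (ε / 2 * ‖T x‖)) * ‖P x‖ :=
    (hC x).trans (by gcongr; exact le_abs_self C)
  have hsplit : exp (T x θ + ε * ‖T x‖) =
      exp (T x θ + ε / 2 * ‖T x‖) * exp (ε / 2 * ‖T x‖) := by
    rw [← exp_add]; ring_nf
  rw [norm_smul, norm_of_nonneg (exp_pos _).le, hsplit]
  calc _ ≤ exp (T x θ + ε / 2 * ‖T x‖) *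
        (|C| * (2 / ε * exp (ε / 2 * ‖T x‖)) * ‖P x‖) := by gcongr
    _ = _ := by ring

theorem smulRight (h : IntegrableExpAt μ T P θ) (hT : AEStronglyMeasurable T μ) :
    IntegrableExpAt μ T (fun x => (T x).smulRight (P x)) θ :=
  h.of_norm_le (C := 1) hT
    ((ContinuousLinearMap.smulRightL ℝ V F).aestronglyMeasurable_comp₂ hT
      (h.aestronglyMeasurable_weight hT))
    fun x => by rw [one_mul, ContinuousLinearMap.norm_smulRight_apply]

theorem apply_smul (h : IntegrableExpAt μ T P θ) (hT : AEStronglyMeasurable T μ) (w : V) :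
    IntegrableExpAt μ T (fun x => T x w • P x) θ :=
  h.of_norm_le (C := ‖w‖) hT
    ((hT.apply_continuousLinearMap w).smul (h.aestronglyMeasurable_weight hT)) fun x => by
      rw [norm_smul, mul_comm ‖w‖]
      gcongr
      exact (T x).le_opNorm w

theorem integrable (h : IntegrableExpAt μ T P θ) (hT : AEStronglyMeasurable T μ) :
    Integrable (fun x => exp (T x θ) • P x) μ := by
  obtain ⟨ε, hε, hint⟩ := id h
  refine hint.mono ((continuous_exp.comp_aestronglyMeasurable (hT.apply_continuousLinearMap θ)).smul
    (h.aestronglyMeasurable_weight hT)) (.of_forall fun x => ?_)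
  rw [norm_smul, norm_smul, norm_of_nonneg (exp_pos _).le, norm_of_nonneg (exp_pos _).le]
  gcongr
  exact le_add_of_nonneg_right (by positivity)

theorem exists_ball_exp_le (h : IntegrableExpAt μ T P θ) :
    ∃ ε > 0, ∃ bound : X → ℝ, Integrable bound μ ∧
      ∀ x, ∀ θ' ∈ Metric.ball θ ε, exp (T x θ' + ε * ‖T x‖) * ‖P x‖ ≤ bound x := by
  obtain ⟨ε, hε, hint⟩ := h
  refine ⟨ε / 2, half_pos hε, _, hint.norm, fun x θ' hθ' => ?_⟩
  have hT_le : T x θ' - T x θ ≤ ε / 2 * ‖T x‖ := by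
    rw [← map_sub, mul_comm]
    exact (le_abs_self _).trans (((T x).le_opNorm _).trans
      (by gcongr; exact (mem_ball_iff_norm.1 hθ').le))
  rw [norm_smul, norm_of_nonneg (exp_pos _).le]
  exact mul_le_mul_of_nonneg_right (exp_le_exp.2 (by linarith)) (norm_nonneg _)

theorem eventually (h : IntegrableExpAt μ T P θ) (hT : AEStronglyMeasurable T μ) :
    ∀ᶠ θ' in 𝓝 θ, IntegrableExpAt μ T P θ' := by
  obtain ⟨ε, hε, bound, hbound, hle⟩ := h.exists_ball_exp_le
  filter_upwards [Metric.ball_mem_nhds θ hε] with θ' hθ'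
  exact of_exp_mul_norm_le hT (h.aestronglyMeasurable_weight hT) hε hbound
    (.of_forall fun x => hle x θ' hθ')

theorem hasFDerivAt (h : IntegrableExpAt μ T P θ) (hT : AEStronglyMeasurable T μ) :
    HasFDerivAt (fun θ => ∫ x, exp (T x θ) • P x ∂μ)
      (∫ x, exp (T x θ) • (T x).smulRight (P x) ∂μ) θ := by
  obtain ⟨ε, hε, bound, hbound, hle⟩ := (h.smulRight hT).exists_ball_exp_le
  refine hasFDerivAt_integral_of_dominated_of_fderiv_le (bound := bound)
    (F' := fun θ x => exp (T x θ) • (T x).smulRight (P x)) (Metric.ball_mem_nhds θ hε)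
    ?_ (h.integrable hT) ((h.smulRight hT).integrable hT).aestronglyMeasurable
    (.of_forall fun x θ' hθ' => ?_) hbound (.of_forall fun x θ' _ => ?_)
  · filter_upwards [h.eventually hT] with θ' hθ' using (hθ'.integrable hT).aestronglyMeasurable
  · rw [norm_smul, norm_of_nonneg (exp_pos _).le]
    refine le_trans ?_ (hle x θ' hθ')
    gcongr
    exact le_add_of_nonneg_right (by positivity)
  · convert ((T x).hasFDerivAt (x := θ')).exp.smul_const (P x) using 1
    ext
    simp [smul_smul]

theorem hasStrictFDerivAt (h : IntegrableExpAt μ T P θ) (hT : AEStronglyMeasurable T μ) :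
    HasStrictFDerivAt (fun θ => ∫ x, exp (T x θ) • P x ∂μ)
      (∫ x, exp (T x θ) • (T x).smulRight (P x) ∂μ) θ :=
  hasStrictFDerivAt_of_hasFDerivAt_of_continuousAt
    ((h.eventually hT).mono fun _ h' => h'.hasFDerivAt hT)
    ((h.smulRight hT).hasFDerivAt hT).continuousAt

theorem hasDerivAt_comp [CompleteSpace F] {c : ℝ → V} {w : V} {s : ℝ}
    (h : IntegrableExpAt μ T P (c s)) (hT : AEStronglyMeasurable T μ) (hc : HasDerivAt c w s) :
    HasDerivAt (fun s => ∫ x, exp (T x (c s)) • P x ∂μ)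
      (∫ x, exp (T x (c s)) • T x w • P x ∂μ) s := by
  refine ((h.hasFDerivAt hT).comp_hasDerivAt s hc).congr_deriv ?_
  rw [ContinuousLinearMap.integral_apply ((h.smulRight hT).integrable hT)]
  rfl

end IntegrableExpAt

end ExponentialFamily

section Envelope

theorem continuousAt_of_strictMonoOn_of_eq_zero {X : Type*} [TopologicalSpace X]
    {g : X → ℝ → ℝ} {S : X → ℝ} {x₀ : X} {U : Set ℝ} (hU : U ∈ 𝓝 (S x₀))
    (hmono : ∀ᶠ x in 𝓝 x₀, StrictMonoOn (g x) U) (hSU : ∀ᶠ x in 𝓝 x₀, S x ∈ U)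
    (hcont : ∀ s ∈ U, ContinuousAt (fun x => g x s) x₀) (hroot : ∀ᶠ x in 𝓝 x₀, g x (S x) = 0) :
    ContinuousAt S x₀ := by
  have hmono₀ := hmono.self_of_nhds
  have hroot₀ := hroot.self_of_nhds
  refine tendsto_order.2 ⟨fun a ha => ?_, fun a ha => ?_⟩
  · obtain ⟨s, hsU, has, hs⟩ :=
      Filter.nonempty_of_mem (inter_mem (mem_nhdsWithin_of_mem_nhds hU) (Ioo_mem_nhdsLT ha))
    have hneg : g x₀ s < 0 := hroot₀ ▸ hmono₀ hsU (mem_of_mem_nhds hU) hs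
    filter_upwards [hmono, hSU, hroot, (hcont s hsU).eventually_lt_const hneg]
      with x hx hxU hx0 hxs
    exact has.trans ((hx.lt_iff_lt hsU hxU).1 (hxs.trans_eq hx0.symm))
  · obtain ⟨s, hsU, hs, hsa⟩ :=
      Filter.nonempty_of_mem (inter_mem (mem_nhdsWithin_of_mem_nhds hU) (Ioo_mem_nhdsGT ha))
    have hpos : 0 < g x₀ s := hroot₀ ▸ hmono₀ (mem_of_mem_nhds hU) hsU hs
    filter_upwards [hmono, hSU, hroot, (hcont s hsU).eventually_const_lt hpos]
      with x hx hxU hx0 hxs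
    exact ((hx.lt_iff_lt hxU hsU).1 (hx0.trans_lt hxs)).trans hsa

theorem hasFDerivAt_of_continuousAt_maximizer {X Y : Type*} [NormedAddCommGroup X]
    [NormedSpace ℝ X] [NormedAddCommGroup Y] [NormedSpace ℝ Y] {Φ : X × Y → ℝ} {S : X → Y}
    {x₀ : X} {D : X × Y →L[ℝ] ℝ} (hΦ : HasStrictFDerivAt Φ D (x₀, S x₀)) (hS : ContinuousAt S x₀)
    (hmax : ∀ᶠ x in 𝓝 x₀, Φ (x, S x₀) ≤ Φ (x, S x) ∧ Φ (x₀, S x) ≤ Φ (x₀, S x₀)) :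
    HasFDerivAt (fun x => Φ (x, S x)) (D ∘L .inl ℝ X Y) x₀ := by
  rw [hasFDerivAt_iff_isLittleO, Asymptotics.isLittleO_iff]
  intro c hc
  have hlin : ∀ y, Tendsto y (𝓝 x₀) (𝓝 (S x₀)) → ∀ᶠ x in 𝓝 x₀,
      |Φ (x, y x) - Φ (x₀, y x) - D (x - x₀, 0)| ≤ c * ‖x - x₀‖ := fun y hy => by
    have hpair : Tendsto (fun x => ((x, y x), (x₀, y x))) (𝓝 x₀) (𝓝 ((x₀, S x₀), (x₀, S x₀))) :=
      (tendsto_id.prodMk_nhds hy).prodMk_nhds (tendsto_const_nhds.prodMk_nhds hy)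
    filter_upwards [hpair.eventually (Asymptotics.isLittleO_iff.1 hΦ.isLittleO hc)] with x hx
    simpa using hx
  filter_upwards [hmax, hlin _ tendsto_const_nhds, hlin S hS] with x ⟨hx, hx₀⟩ hlower hupper
  rw [abs_le] at hlower hupper
  rw [norm_eq_abs, abs_le, ContinuousLinearMap.comp_apply, ContinuousLinearMap.inl_apply]
  constructor <;> linarith

end Envelope

section LegendreTransform

/-- The Legendre transform of a function on the open half-line `(0, ∞)`. -/
noncomputable def legendreTransform (f : ℝ → ℝ) (r : ℝ) : ℝ :=
  ⨆ s : Ioi (0 : ℝ), (r * (s : ℝ) - f s)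

theorem mul_sub_le_of_hasDerivAt_of_monotoneOn {f g : ℝ → ℝ} {D : Set ℝ} (hD : Convex ℝ D)
    (hf : ∀ s ∈ D, HasDerivAt f (g s) s) (hg : MonotoneOn g D) {s x : ℝ}
    (hs : s ∈ interior D) (hx : x ∈ D) : g s * x - f x ≤ g s * s - f s := by
  have hderiv : ∀ x ∈ D, HasDerivAt (fun x => f x - g s * x) (g x - g s) x := fun x hx =>
    ((hf x hx).sub ((hasDerivAt_id x).const_mul (g s))).congr_deriv (by rw [mul_one])
  have hconvex : ConvexOn ℝ D fun x => f x - g s * x := by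
    refine MonotoneOn.convexOn_of_deriv hD
      (fun x hx => (hderiv x hx).continuousAt.continuousWithinAt)
      (fun x hx => (hderiv x (interior_subset hx)).differentiableAt.differentiableWithinAt)
      fun x hx y hy hxy => ?_
    rw [(hderiv x (interior_subset hx)).deriv, (hderiv y (interior_subset hy)).deriv]
    exact sub_le_sub_right (hg (interior_subset hx) (interior_subset hy) hxy) _
  have hcritical : derivWithin (fun x => f x - g s * x) (Ioi s) s = 0 := by
    rw [(hderiv s (interior_subset hs)).hasDerivWithinAt.derivWithin (uniqueDiffWithinAt_Ioi s),
      sub_self]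
  have hmin : f s - g s * s ≤ f x - g s * x :=
    hconvex.isMinOn_of_rightDeriv_eq_zero hs hcritical hx
  linarith

theorem legendreTransform_eq_of_forall_le {f : ℝ → ℝ} {r s : ℝ} (hs : 0 < s)
    (hle : ∀ x > 0, r * x - f x ≤ r * s - f s) : legendreTransform f r = r * s - f s :=
  have : Nonempty (Ioi (0 : ℝ)) := ⟨⟨s, hs⟩⟩
  le_antisymm (ciSup_le fun x => hle x x.2)
    (le_ciSup (f := fun x : Ioi (0 : ℝ) => r * (x : ℝ) - f x)
      ⟨r * s - f s, forall_mem_range.2 fun x => hle x x.2⟩ ⟨s, hs⟩)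

theorem hasDerivAt_of_hasStrictFDerivAt_prod {f : ℝ × ℝ → ℝ} {p q t s : ℝ}
    (h : HasStrictFDerivAt f (p • .fst ℝ ℝ ℝ + q • .snd ℝ ℝ ℝ) (t, s)) :
    HasDerivAt (fun s => f (t, s)) q s :=
  (h.hasFDerivAt.comp_hasDerivAt s
    ((hasDerivAt_const s t).prodMk (hasDerivAt_id s))).congr_deriv (by simp)

theorem eventually_nhds_prod_pos {t r : ℝ} (ht : 0 < t) (hr : 0 < r) :
    ∀ᶠ p in 𝓝 (t, r), 0 < p.1 ∧ 0 < p.2 :=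
  (lt_mem_nhds ht).prod_nhds (lt_mem_nhds hr)

/-- A smooth one-parameter family of strictly convex functions `P t` on `(0, ∞)`, `t > 0`, with
time derivative `P'`, slope `G t` and curvature `H t`, whose slopes exhaust `(0, ∞)`. -/
structure IsStrictlyConvexEvolution (P P' G H : ℝ → ℝ → ℝ) : Prop where
  hasStrictFDerivAt : ∀ t > 0, ∀ s > 0, HasStrictFDerivAt (fun p : ℝ × ℝ => P p.1 p.2)
    (P' t s • .fst ℝ ℝ ℝ + G t s • .snd ℝ ℝ ℝ) (t, s)
  hasDerivAt_slope : ∀ t > 0, ∀ s > 0, HasDerivAt (G t) (H t s) s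
  continuousAt_slope : ∀ t > 0, ∀ s > 0, ContinuousAt (fun t => G t s) t
  curvature_pos : ∀ t > 0, ∀ s > 0, 0 < H t s
  exists_slope_eq : ∀ t > 0, ∀ r > 0, ∃ s > 0, G t s = r

/-- The point of `(0, ∞)` at which the slope `G t` equals `r`. It maximises `s ↦ r * s - P t s`
when `G t` is the slope of a convex function `P t`. -/
noncomputable def dualPoint (G : ℝ → ℝ → ℝ) (t r : ℝ) : ℝ :=
  Function.invFunOn (G t) (Ioi 0) r

namespace IsStrictlyConvexEvolution

variable {P P' G H : ℝ → ℝ → ℝ} {t r : ℝ}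

theorem hasDerivAt (h : IsStrictlyConvexEvolution P P' G H) (ht : 0 < t) {s : ℝ} (hs : 0 < s) :
    HasDerivAt (P t) (G t s) s :=
  hasDerivAt_of_hasStrictFDerivAt_prod (h.hasStrictFDerivAt t ht s hs)

theorem strictMonoOn_slope (h : IsStrictlyConvexEvolution P P' G H) (ht : 0 < t) :
    StrictMonoOn (G t) (Ioi 0) :=
  strictMonoOn_of_deriv_pos (convex_Ioi 0)
    (fun s hs => (h.hasDerivAt_slope t ht s hs).continuousAt.continuousWithinAt)
    fun s hs => by
      rw [interior_Ioi] at hs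
      exact (h.hasDerivAt_slope t ht s hs).deriv ▸ h.curvature_pos t ht s hs

theorem dualPoint_pos (h : IsStrictlyConvexEvolution P P' G H) (ht : 0 < t) (hr : 0 < r) :
    0 < dualPoint G t r :=
  Function.invFunOn_mem (h.exists_slope_eq t ht r hr)

theorem slope_dualPoint (h : IsStrictlyConvexEvolution P P' G H) (ht : 0 < t) (hr : 0 < r) :
    G t (dualPoint G t r) = r :=
  Function.invFunOn_eq (h.exists_slope_eq t ht r hr)

theorem mul_sub_le (h : IsStrictlyConvexEvolution P P' G H) (ht : 0 < t) (hr : 0 < r) {s : ℝ}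
    (hs : 0 < s) : r * s - P t s ≤ r * dualPoint G t r - P t (dualPoint G t r) := by
  have hle := mul_sub_le_of_hasDerivAt_of_monotoneOn (convex_Ioi 0)
    (fun s hs => h.hasDerivAt ht hs) (h.strictMonoOn_slope ht).monotoneOn
    (interior_Ioi.ge (h.dualPoint_pos ht hr)) hs
  rwa [h.slope_dualPoint ht hr] at hle

theorem legendreTransform_eq (h : IsStrictlyConvexEvolution P P' G H) (ht : 0 < t) (hr : 0 < r) :
    legendreTransform (P t) r = r * dualPoint G t r - P t (dualPoint G t r) :=
  legendreTransform_eq_of_forall_le (h.dualPoint_pos ht hr) fun _ hs => h.mul_sub_le ht hr hs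

theorem continuousAt_dualPoint (h : IsStrictlyConvexEvolution P P' G H) (ht : 0 < t)
    (hr : 0 < r) : ContinuousAt (fun p : ℝ × ℝ => dualPoint G p.1 p.2) (t, r) := by
  refine continuousAt_of_strictMonoOn_of_eq_zero (g := fun p s => G p.1 s - p.2)
    (Ioi_mem_nhds (h.dualPoint_pos ht hr)) ?_ ?_ (fun s hs => ?_) ?_
  · filter_upwards [eventually_nhds_prod_pos ht hr] with p hp x hx y hy hxy
    exact sub_lt_sub_right (h.strictMonoOn_slope hp.1 hx hy hxy) _
  · filter_upwards [eventually_nhds_prod_pos ht hr] with p hp using h.dualPoint_pos hp.1 hp.2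
  · exact (ContinuousAt.comp (x := (t, r)) (f := Prod.fst) (h.continuousAt_slope t ht s hs)
      continuousAt_fst).sub continuousAt_snd
  · filter_upwards [eventually_nhds_prod_pos ht hr] with p hp
    rw [h.slope_dualPoint hp.1 hp.2, sub_self]

theorem hasFDerivAt_legendreTransform (h : IsStrictlyConvexEvolution P P' G H) (ht : 0 < t)
    (hr : 0 < r) : HasFDerivAt (fun p : ℝ × ℝ => legendreTransform (P p.1) p.2)
      (-P' t (dualPoint G t r) • .fst ℝ ℝ ℝ + dualPoint G t r • .snd ℝ ℝ ℝ) (t, r) := by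
  set s := dualPoint G t r
  have hs : 0 < s := h.dualPoint_pos ht hr
  let Φ : (ℝ × ℝ) × ℝ → ℝ := fun q => q.1.2 * q.2 - P q.1.1 q.2
  have hΦ : HasStrictFDerivAt Φ _ ((t, r), s) :=
    ((hasStrictFDerivAt_fst.snd).mul hasStrictFDerivAt_snd).sub
      (HasStrictFDerivAt.comp (f := fun q : (ℝ × ℝ) × ℝ => (q.1.1, q.2)) ((t, r), s)
        (h.hasStrictFDerivAt t ht s hs) (hasStrictFDerivAt_fst.fst.prodMk hasStrictFDerivAt_snd))
  have hvalue := hasFDerivAt_of_continuousAt_maximizer (x₀ := (t, r))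
    (S := fun p => dualPoint G p.1 p.2) hΦ (h.continuousAt_dualPoint ht hr) <| by
      filter_upwards [eventually_nhds_prod_pos ht hr] with p hp
      exact ⟨h.mul_sub_le hp.1 hp.2 hs, h.mul_sub_le ht hr (h.dualPoint_pos hp.1 hp.2)⟩
  refine (hvalue.congr_of_eventuallyEq ?_).congr_fderiv ?_
  · filter_upwards [eventually_nhds_prod_pos ht hr] with p hp using h.legendreTransform_eq hp.1 hp.2
  · ext <;> simp [s]

theorem deriv_legendreTransform_time (h : IsStrictlyConvexEvolution P P' G H) (ht : 0 < t)
    (hr : 0 < r) :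
    deriv (fun τ => legendreTransform (P τ) r) t = -P' t (dualPoint G t r) := by
  have hderiv := (h.hasFDerivAt_legendreTransform ht hr).comp_hasDerivAt t
    ((hasDerivAt_id' t).prodMk (hasDerivAt_const t r))
  exact hderiv.deriv.trans (by simp)

theorem deriv_legendreTransform (h : IsStrictlyConvexEvolution P P' G H) (ht : 0 < t)
    (hr : 0 < r) : deriv (legendreTransform (P t)) r = dualPoint G t r :=
  ((h.hasFDerivAt_legendreTransform ht hr).comp_hasDerivAt r
    ((hasDerivAt_const r t).prodMk (hasDerivAt_id r))).deriv.trans (by simp)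

theorem deriv_deriv_legendreTransform (h : IsStrictlyConvexEvolution P P' G H) (ht : 0 < t)
    (hr : 0 < r) :
    deriv (deriv (legendreTransform (P t))) r = (H t (dualPoint G t r))⁻¹ := by
  have hderiv : deriv (legendreTransform (P t)) =ᶠ[𝓝 r] dualPoint G t := by
    filter_upwards [lt_mem_nhds hr] with r' hr' using h.deriv_legendreTransform ht hr'
  have hcont : ContinuousAt (dualPoint G t) r :=
    ContinuousAt.comp (f := fun r' => (t, r')) (h.continuousAt_dualPoint ht hr)
      (Continuous.prodMk_right t).continuousAt
  have hs := h.dualPoint_pos ht hr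
  rw [hderiv.deriv_eq]
  refine (HasDerivAt.of_local_left_inverse hcont (h.hasDerivAt_slope t ht _ hs)
    (h.curvature_pos t ht _ hs).ne' ?_).deriv
  filter_upwards [lt_mem_nhds hr] with r' hr' using h.slope_dualPoint ht hr'

theorem legendreTransform_evolution (h : IsStrictlyConvexEvolution P P' G H) {d : ℝ}
    (hP' : ∀ t > 0, ∀ s > 0, P' t s = -G t s ^ 2 + H t s + d * G t s / s)
    (ht : 0 < t) (hr : 0 < r) :
    deriv (fun τ => legendreTransform (P τ) r) t =
      -1 / deriv (deriv (legendreTransform (P t))) r + r ^ 2 -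
        d * r / deriv (legendreTransform (P t)) r := by
  rw [h.deriv_legendreTransform_time ht hr, h.deriv_deriv_legendreTransform ht hr,
    h.deriv_legendreTransform ht hr, hP' t ht _ (h.dualPoint_pos ht hr),
    h.slope_dualPoint ht hr, div_inv_eq_mul]
  ring

end IsStrictlyConvexEvolution

end LegendreTransform

section RotationInvariant

variable {E : Type*} [NormedAddCommGroup E] [InnerProductSpace ℝ E]

/-- The linear form `(v, b) ↦ ⟪y, v⟫ - b * ‖y‖²`: the sufficient statistic of the exponential
family of Gaussian tilts of a measure on `E`. -/
noncomputable def gaussStat (y : E) : E × ℝ →L[ℝ] ℝ :=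
  innerSL ℝ y ∘L .fst ℝ E ℝ - ‖y‖ ^ 2 • .snd ℝ E ℝ

@[simp]
theorem gaussStat_apply (y : E) (θ : E × ℝ) : gaussStat y θ = ⟪y, θ.1⟫ - θ.2 * ‖y‖ ^ 2 := by
  simp [gaussStat, mul_comm]

theorem continuous_gaussStat : Continuous (gaussStat : E → E × ℝ →L[ℝ] ℝ) :=
  ((innerSL ℝ).continuous.clm_comp continuous_const).sub
    ((continuous_norm.pow 2).smul continuous_const)

variable [MeasurableSpace E] {ν : Measure E}

/-- The integral of `P` against the tilt of `ν` with parameter `θ = (v, b)`. -/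
noncomputable def tiltedIntegral (ν : Measure E) (P : E → ℝ) (θ : E × ℝ) : ℝ :=
  ∫ y, exp (gaussStat y θ) * P y ∂ν

/-- The tilts of `ν` with parameters near `θ` are finite measures. -/
abbrev TiltableAt (ν : Measure E) (θ : E × ℝ) : Prop :=
  IntegrableExpAt ν gaussStat (1 : E → ℝ) θ

/-- A measure on an inner product space that is preserved by every linear isometry. -/
def IsRotationInvariant (ν : Measure E) : Prop :=
  ∀ R : E ≃ₗᵢ[ℝ] E, MeasurePreserving R ν ν

variable [BorelSpace E]

theorem IsRotationInvariant.tiltedIntegral_inner_eq_zero (hν : IsRotationInvariant ν) {u v : E}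
    (huv : ⟪u, v⟫ = 0) (b : ℝ) : tiltedIntegral ν (fun y => ⟪y, u⟫) (v, b) = 0 := by
  set R := (ℝ ∙ u)ᗮ.reflection
  have hRu : R u = -u := Submodule.reflection_orthogonalComplement_singleton_eq_neg u
  have hRv : R v = v := Submodule.reflection_mem_subspace_eq_self
    (Submodule.mem_orthogonal_singleton_iff_inner_right.2 huv)
  have hodd : tiltedIntegral ν (fun y => ⟪y, u⟫) (v, b) =
      -tiltedIntegral ν (fun y => ⟪y, u⟫) (v, b) := by
    rw [tiltedIntegral, ← integral_neg, ← (hν R).integral_comp R.toHomeomorph.measurableEmbedding]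
    refine integral_congr_ae (.of_forall fun y => ?_)
    have hu : ⟪R y, u⟫ = -⟪y, u⟫ := by
      rw [← inner_neg_right, ← R.inner_map_map y, map_neg, hRu, neg_neg]
    have hv : ⟪R y, v⟫ = ⟪y, v⟫ := by rw [← R.inner_map_map y, hRv]
    simp only [gaussStat_apply, hu, hv, R.norm_map, mul_neg]
  linarith

variable [FiniteDimensional ℝ E]

theorem aestronglyMeasurable_gaussStat : AEStronglyMeasurable gaussStat ν :=
  continuous_gaussStat.aestronglyMeasurable

theorem IntegrableExpAt.integrable_tilt {P : E → ℝ} {θ : E × ℝ}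
    (h : IntegrableExpAt ν gaussStat P θ) : Integrable (fun y => exp (gaussStat y θ) * P y) ν :=
  h.integrable aestronglyMeasurable_gaussStat

theorem IntegrableExpAt.inner_mul {P : E → ℝ} {θ : E × ℝ}
    (h : IntegrableExpAt ν gaussStat P θ) (u : E) :
    IntegrableExpAt ν gaussStat (fun y => ⟪y, u⟫ * P y) θ := by
  simpa using h.apply_smul aestronglyMeasurable_gaussStat (u, 0)

theorem IntegrableExpAt.hasDerivAt_tiltedIntegral {P : E → ℝ} {v : E} {b : ℝ}
    (h : IntegrableExpAt ν gaussStat P (v, b)) (u : E) :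
    HasDerivAt (fun s : ℝ => tiltedIntegral ν P (v + s • u, b))
      (tiltedIntegral ν (fun y => ⟪y, u⟫ * P y) (v, b)) 0 := by
  have hc : HasDerivAt (fun s : ℝ => (v + s • u, b)) (u, 0) 0 := by
    simpa using (((hasDerivAt_id (0 : ℝ)).smul_const u).const_add v).prodMk (hasDerivAt_const 0 b)
  have h₀ : IntegrableExpAt ν gaussStat P (v + (0 : ℝ) • u, b) := by simpa using h
  simpa [tiltedIntegral] using
    h₀.hasDerivAt_comp (c := fun s => (v + s • u, b)) aestronglyMeasurable_gaussStat hc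

theorem IsRotationInvariant.mul_tiltedIntegral_inner_eq (hν : IsRotationInvariant ν) {u v w : E}
    {b p q : ℝ} (h : TiltableAt ν (w, b)) (horth : p * ⟪u, w⟫ = q * ⟪v, w⟫) :
    p * tiltedIntegral ν (fun y => ⟪y, u⟫) (w, b) =
      q * tiltedIntegral ν (fun y => ⟪y, v⟫) (w, b) := by
  have hint : ∀ u : E, Integrable (fun y => exp (gaussStat y (w, b)) * ⟪y, u⟫) ν := fun u => by
    simpa using (h.inner_mul u).integrable_tilt
  have hzero := hν.tiltedIntegral_inner_eq_zero (u := p • u - q • v) (v := w)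
    (by rw [inner_sub_left, real_inner_smul_left, real_inner_smul_left, horth, sub_self]) b
  rw [← sub_eq_zero, ← hzero, tiltedIntegral, tiltedIntegral, tiltedIntegral,
    ← integral_const_mul, ← integral_const_mul,
    ← integral_sub ((hint u).const_mul p) ((hint v).const_mul q)]
  simp only [inner_sub_right, real_inner_smul_right]
  exact integral_congr_ae (.of_forall fun y => by ring)

-- Differentiate, along `u`, the relation expressing that the mean of the tilt is parallel to `v`.
theorem IsRotationInvariant.norm_sq_mul_tiltedIntegral_inner_sq (hν : IsRotationInvariant ν)
    {v : E} {b : ℝ} (h : TiltableAt ν (v, b)) (u : E) :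
    ⟪u, v⟫ * tiltedIntegral ν (fun y => ⟪y, u⟫) (v, b) +
        ‖v‖ ^ 2 * tiltedIntegral ν (fun y => ⟪y, u⟫ * ⟪y, u⟫) (v, b) =
      ‖u‖ ^ 2 * tiltedIntegral ν (fun y => ⟪y, v⟫) (v, b) +
        ⟪u, v⟫ * tiltedIntegral ν (fun y => ⟪y, u⟫ * ⟪y, v⟫) (v, b) := by
  have hderiv : ∀ w : E, HasDerivAt
      (fun s : ℝ => tiltedIntegral ν (fun y => ⟪y, w⟫) (v + s • u, b))
      (tiltedIntegral ν (fun y => ⟪y, u⟫ * ⟪y, w⟫) (v, b)) 0 := fun w =>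
    IntegrableExpAt.hasDerivAt_tiltedIntegral (by simpa using h.inner_mul w) u
  have hlin : ∀ p q : ℝ, HasDerivAt (fun s => p + s * q) q 0 := fun p q => by
    simpa using ((hasDerivAt_id (0 : ℝ)).mul_const q).const_add p
  have hcurve : Tendsto (fun s : ℝ => (v + s • u, b)) (𝓝 0) (𝓝 (v, b)) :=
    Continuous.tendsto' (by fun_prop) _ _ (by simp)
  have heq : (fun s : ℝ => (‖v‖ ^ 2 + s * ⟪u, v⟫) *
        tiltedIntegral ν (fun y => ⟪y, u⟫) (v + s • u, b)) =ᶠ[𝓝 0]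
      fun s => (⟪u, v⟫ + s * ‖u‖ ^ 2) * tiltedIntegral ν (fun y => ⟪y, v⟫) (v + s • u, b) := by
    filter_upwards [hcurve.eventually (h.eventually aestronglyMeasurable_gaussStat)] with s hs
    refine hν.mul_tiltedIntegral_inner_eq hs ?_
    simp only [inner_add_right, real_inner_smul_right, real_inner_self_eq_norm_sq,
      real_inner_comm u v]
    ring
  simpa using (((hlin _ _).mul (hderiv u)).congr_of_eventuallyEq heq.symm).unique
    ((hlin _ _).mul (hderiv v))

theorem IntegrableExpAt.sum_inner_mul_tiltedIntegral {ι : Type*} [Fintype ι] {P : E → ℝ}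
    {θ : E × ℝ} (h : IntegrableExpAt ν gaussStat P θ) (B : OrthonormalBasis ι ℝ E) (v : E) :
    ∑ i, ⟪B i, v⟫ * tiltedIntegral ν (fun y => ⟪y, B i⟫ * P y) θ =
      tiltedIntegral ν (fun y => ⟪y, v⟫ * P y) θ := by
  simp only [tiltedIntegral, ← integral_const_mul]
  rw [← integral_finsetSum _ fun i _ =>
    (h.inner_mul (B i)).integrable_tilt.const_mul _]
  refine integral_congr_ae (.of_forall fun y => ?_)
  simp only [← B.sum_inner_mul_inner y v, Finset.sum_mul, Finset.mul_sum]
  exact Finset.sum_congr rfl fun i _ => by ring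

theorem TiltableAt.sum_tiltedIntegral_inner_sq {ι : Type*} [Fintype ι] {θ : E × ℝ}
    (h : TiltableAt ν θ) (B : OrthonormalBasis ι ℝ E) :
    ∑ i, tiltedIntegral ν (fun y => ⟪y, B i⟫ * ⟪y, B i⟫) θ =
      tiltedIntegral ν (fun y => ‖y‖ ^ 2) θ := by
  have hint : ∀ i, Integrable (fun y => exp (gaussStat y θ) * (⟪y, B i⟫ * ⟪y, B i⟫)) ν := by
    intro i
    simpa using ((h.inner_mul (B i)).inner_mul (B i)).integrable_tilt
  simp only [tiltedIntegral]
  rw [← integral_finsetSum _ fun i _ => hint i]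
  refine integral_congr_ae (.of_forall fun y => ?_)
  simp only [← B.sum_sq_inner_left y, Finset.mul_sum, sq]

open Module in
theorem IsRotationInvariant.norm_sq_mul_tiltedIntegral_norm_sq (hν : IsRotationInvariant ν)
    {v : E} {b : ℝ} (h : TiltableAt ν (v, b)) :
    ‖v‖ ^ 2 * tiltedIntegral ν (fun y => ‖y‖ ^ 2) (v, b) =
      (finrank ℝ E - 1) * tiltedIntegral ν (fun y => ⟪y, v⟫) (v, b) +
        tiltedIntegral ν (fun y => ⟪y, v⟫ * ⟪y, v⟫) (v, b) := by
  set B := stdOrthonormalBasis ℝ E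
  have hmean : ∑ i, ⟪B i, v⟫ * tiltedIntegral ν (fun y => ⟪y, B i⟫) (v, b) =
      tiltedIntegral ν (fun y => ⟪y, v⟫) (v, b) := by
    simpa using h.sum_inner_mul_tiltedIntegral B v
  have hsecond : ∑ i, ⟪B i, v⟫ * tiltedIntegral ν (fun y => ⟪y, B i⟫ * ⟪y, v⟫) (v, b) =
      tiltedIntegral ν (fun y => ⟪y, v⟫ * ⟪y, v⟫) (v, b) := by
    simpa using (h.inner_mul v).sum_inner_mul_tiltedIntegral B v
  have hsum := Finset.sum_congr (rfl : Finset.univ = Finset.univ)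
    fun i _ => hν.norm_sq_mul_tiltedIntegral_inner_sq h (B i)
  simp only [Finset.sum_add_distrib, ← Finset.mul_sum, hmean, hsecond,
    h.sum_tiltedIntegral_inner_sq B, B.orthonormal.norm_eq_one, one_pow, Finset.sum_const,
    Finset.card_univ, Fintype.card_fin, nsmul_eq_mul] at hsum
  linear_combination hsum

end RotationInvariant

section AxialMoment

open Module

variable {E : Type*} [NormedAddCommGroup E] [InnerProductSpace ℝ E] [MeasurableSpace E]
  {ν : Measure E} {e : E} {k : ℕ} {a b : ℝ}

/-- The moment of order `k` of the coordinate `⟪y, e⟫` under the tilt of `ν` with parameter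
`(a • e, b)`. -/
noncomputable def axialMoment (ν : Measure E) (e : E) (k : ℕ) (a b : ℝ) : ℝ :=
  ∫ y, exp (a * ⟪y, e⟫ - b * ‖y‖ ^ 2) * ⟪y, e⟫ ^ k ∂ν

/-- The mean of `⟪y, e⟫` under the normalised tilt of `ν` with parameter `(a • e, b)`. -/
noncomputable def axialMean (ν : Measure E) (e : E) (a b : ℝ) : ℝ :=
  axialMoment ν e 1 a b / axialMoment ν e 0 a b

/-- The variance of `⟪y, e⟫` under the normalised tilt of `ν` with parameter `(a • e, b)`. -/
noncomputable def axialVariance (ν : Measure E) (e : E) (a b : ℝ) : ℝ :=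
  axialMoment ν e 2 a b / axialMoment ν e 0 a b - axialMean ν e a b ^ 2

theorem axialMoment_eq_tiltedIntegral (ν : Measure E) (e : E) (k : ℕ) (a b : ℝ) :
    axialMoment ν e k a b = tiltedIntegral ν (fun y => ⟪y, e⟫ ^ k) (a • e, b) := by
  simp [axialMoment, tiltedIntegral, real_inner_smul_right]

variable [BorelSpace E] [FiniteDimensional ℝ E]

theorem TiltableAt.inner_pow {θ : E × ℝ} (h : TiltableAt ν θ) (e : E) (k : ℕ) :
    IntegrableExpAt ν gaussStat (fun y => ⟪y, e⟫ ^ k) θ := by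
  induction k with
  | zero => simp only [pow_zero]; exact h
  | succ k ih => simpa only [pow_succ'] using ih.inner_mul e

theorem TiltableAt.integrable_axial (h : TiltableAt ν (a • e, b)) (k : ℕ) :
    Integrable (fun y => exp (a * ⟪y, e⟫ - b * ‖y‖ ^ 2) * ⟪y, e⟫ ^ k) ν := by
  simpa [real_inner_smul_right] using (h.inner_pow e k).integrable_tilt

theorem TiltableAt.axialMoment_zero_pos [NeZero ν] (h : TiltableAt ν (a • e, b)) :
    0 < axialMoment ν e 0 a b := by
  have hint : Integrable (fun y => exp (a * ⟪y, e⟫ - b * ‖y‖ ^ 2)) ν := by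
    simpa only [pow_zero, mul_one] using h.integrable_axial 0
  simpa only [axialMoment, pow_zero, mul_one] using integral_exp_pos hint

theorem TiltableAt.axialMoment_one_eq [NeZero ν] (h : TiltableAt ν (a • e, b)) :
    axialMoment ν e 1 a b = axialMean ν e a b * axialMoment ν e 0 a b := by
  rw [axialMean, div_mul_cancel₀ _ h.axialMoment_zero_pos.ne']

theorem TiltableAt.axialMoment_two_eq [NeZero ν] (h : TiltableAt ν (a • e, b)) :
    axialMoment ν e 2 a b =
      (axialVariance ν e a b + axialMean ν e a b ^ 2) * axialMoment ν e 0 a b := by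
  rw [axialVariance, sub_add_cancel, div_mul_cancel₀ _ h.axialMoment_zero_pos.ne']

theorem TiltableAt.hasDerivAt_axialMoment (h : TiltableAt ν (a • e, b)) :
    HasDerivAt (fun a => axialMoment ν e k a b) (axialMoment ν e (k + 1) a b) a := by
  have hc : HasDerivAt (fun a : ℝ => (a • e, b)) (e, 0) a := by
    simpa using ((hasDerivAt_id a).smul_const e).prodMk (hasDerivAt_const a b)
  simpa [axialMoment, real_inner_smul_right, pow_succ'] using
    (h.inner_pow e k).hasDerivAt_comp (c := fun a => (a • e, b)) aestronglyMeasurable_gaussStat hc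

theorem TiltableAt.continuousAt_axialMoment {c : ℝ → ℝ × ℝ} {t : ℝ} (hc : ContinuousAt c t)
    (h : TiltableAt ν ((c t).1 • e, (c t).2)) (k : ℕ) :
    ContinuousAt (fun t => axialMoment ν e k (c t).1 (c t).2) t := by
  simp only [axialMoment_eq_tiltedIntegral]
  exact ContinuousAt.comp (f := fun t => ((c t).1 • e, (c t).2))
    ((h.inner_pow e k).hasFDerivAt aestronglyMeasurable_gaussStat).continuousAt
    ((hc.fst.smul continuousAt_const).prodMk hc.snd)

theorem TiltableAt.hasStrictFDerivAt_axialMoment_zero (h : TiltableAt ν (a • e, b)) :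
    HasStrictFDerivAt (fun p : ℝ × ℝ => axialMoment ν e 0 p.1 p.2)
      (axialMoment ν e 1 a b • .fst ℝ ℝ ℝ -
        tiltedIntegral ν (fun y => ‖y‖ ^ 2) (a • e, b) • .snd ℝ ℝ ℝ) (a, b) := by
  let L : ℝ × ℝ →L[ℝ] E × ℝ :=
    ((ContinuousLinearMap.fst ℝ ℝ ℝ).smulRight e).prod (ContinuousLinearMap.snd ℝ ℝ ℝ)
  have hcomp := HasStrictFDerivAt.comp (a, b) (f := L)
    (h.hasStrictFDerivAt aestronglyMeasurable_gaussStat) L.hasStrictFDerivAt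
  have hint :=
    (h.smulRight aestronglyMeasurable_gaussStat).integrable aestronglyMeasurable_gaussStat
  have hfun : (fun p : ℝ × ℝ => axialMoment ν e 0 p.1 p.2) =
      fun p => ∫ y, exp (gaussStat y (L p)) • (1 : E → ℝ) y ∂ν := by
    ext p
    simp [axialMoment, L, real_inner_smul_right]
  rw [hfun]
  have happly : ∀ w : ℝ × ℝ,
      (∫ y, exp (gaussStat y (a • e, b)) • (gaussStat y).smulRight ((1 : E → ℝ) y) ∂ν) (L w) =
        ∫ y, exp (gaussStat y (a • e, b)) * (w.1 * ⟪y, e⟫ - w.2 * ‖y‖ ^ 2) ∂ν := fun w => by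
    rw [ContinuousLinearMap.integral_apply hint]
    simp [L, real_inner_smul_right]
  refine hcomp.congr_fderiv ?_
  ext
  · exact (happly (1, 0)).trans (by simp [axialMoment_eq_tiltedIntegral, tiltedIntegral])
  · exact (happly (0, 1)).trans (by simp [tiltedIntegral, integral_neg])

theorem IsRotationInvariant.tiltedIntegral_norm_sq_eq (hν : IsRotationInvariant ν)
    (he : ‖e‖ = 1) (ha : a ≠ 0) (h : TiltableAt ν (a • e, b)) :
    tiltedIntegral ν (fun y => ‖y‖ ^ 2) (a • e, b) =
      axialMoment ν e 2 a b + (finrank ℝ E - 1) * axialMoment ν e 1 a b / a := by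
  have hbessel := hν.norm_sq_mul_tiltedIntegral_norm_sq h
  have hmean : tiltedIntegral ν (fun y => ⟪y, a • e⟫) (a • e, b) = a * axialMoment ν e 1 a b := by
    simp only [axialMoment_eq_tiltedIntegral, tiltedIntegral, ← integral_const_mul,
      real_inner_smul_right]
    exact integral_congr_ae (.of_forall fun y => by ring)
  have hsecond : tiltedIntegral ν (fun y => ⟪y, a • e⟫ * ⟪y, a • e⟫) (a • e, b) =
      a ^ 2 * axialMoment ν e 2 a b := by
    simp only [axialMoment_eq_tiltedIntegral, tiltedIntegral, ← integral_const_mul,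
      real_inner_smul_right]
    exact integral_congr_ae (.of_forall fun y => by ring)
  rw [hmean, hsecond, norm_smul, he, mul_one, norm_eq_abs, sq_abs] at hbessel
  refine mul_left_cancel₀ (pow_ne_zero 2 ha) (hbessel.trans ?_)
  field_simp
  ring

theorem TiltableAt.integrable_axial_sub_sq (h : TiltableAt ν (a • e, b)) (m : ℝ) :
    Integrable (fun y => exp (a * ⟪y, e⟫ - b * ‖y‖ ^ 2) * (⟪y, e⟫ - m) ^ 2) ν := by
  refine (((h.integrable_axial 2).sub ((h.integrable_axial 1).const_mul (2 * m))).add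
    ((h.integrable_axial 0).const_mul (m ^ 2))).congr (.of_forall fun y => ?_)
  simp only [Pi.add_apply, Pi.sub_apply]
  ring

theorem TiltableAt.axialMoment_zero_mul_axialVariance [NeZero ν] (h : TiltableAt ν (a • e, b)) :
    axialMoment ν e 0 a b * axialVariance ν e a b =
      ∫ y, exp (a * ⟪y, e⟫ - b * ‖y‖ ^ 2) * (⟪y, e⟫ - axialMean ν e a b) ^ 2 ∂ν := by
  set m := axialMean ν e a b with hm
  have hpos := h.axialMoment_zero_pos
  calc axialMoment ν e 0 a b * axialVariance ν e a b
      = axialMoment ν e 2 a b - 2 * m * axialMoment ν e 1 a b + m ^ 2 * axialMoment ν e 0 a b := by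
        rw [axialVariance, hm, axialMean]
        field_simp
        ring
    _ = ∫ y, exp (a * ⟪y, e⟫ - b * ‖y‖ ^ 2) * (⟪y, e⟫ - m) ^ 2 ∂ν := by
        simp only [axialMoment, ← integral_const_mul]
        rw [← integral_sub' (h.integrable_axial 2) ((h.integrable_axial 1).const_mul (2 * m)),
          ← integral_add' ((h.integrable_axial 2).sub ((h.integrable_axial 1).const_mul (2 * m)))
            ((h.integrable_axial 0).const_mul (m ^ 2))]
        refine integral_congr_ae (.of_forall fun y => ?_)
        simp only [Pi.add_apply, Pi.sub_apply]
        ring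

theorem hasDerivAt_axialMean [NeZero ν] (h : TiltableAt ν (a • e, b)) :
    HasDerivAt (fun a => axialMean ν e a b) (axialVariance ν e a b) a := by
  have hpos := h.axialMoment_zero_pos
  refine (h.hasDerivAt_axialMoment.div h.hasDerivAt_axialMoment hpos.ne').congr_deriv ?_
  rw [axialVariance, axialMean]
  field_simp

theorem IsRotationInvariant.hasStrictFDerivAt_log_axialMoment [NeZero ν]
    (hν : IsRotationInvariant ν) (he : ‖e‖ = 1) (ha : a ≠ 0) (h : TiltableAt ν (a • e, b)) :
    HasStrictFDerivAt (fun p : ℝ × ℝ => log (axialMoment ν e 0 p.1 p.2))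
      (axialMean ν e a b • .fst ℝ ℝ ℝ - (axialVariance ν e a b + axialMean ν e a b ^ 2 +
        (finrank ℝ E - 1) * axialMean ν e a b / a) • .snd ℝ ℝ ℝ) (a, b) := by
  have hpos := h.axialMoment_zero_pos
  refine (h.hasStrictFDerivAt_axialMoment_zero.log hpos.ne').congr_fderiv ?_
  rw [hν.tiltedIntegral_norm_sq_eq he ha h]
  rw [smul_sub, smul_smul, smul_smul, axialVariance, axialMean]
  congr 2 <;> field_simp
  ring

end AxialMoment

section HeatPotential

open Module

variable {E : Type*} [NormedAddCommGroup E] [InnerProductSpace ℝ E] [MeasurableSpace E]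
  {ν : Measure E} {e : E} {t s : ℝ}

/-- Minus the logarithm of the heat evolution at time `t` of the measure `ν`, at the point `s • e`
with `‖e‖ = 1`, after expanding `‖s • e - y‖ ^ 2` in the heat kernel. -/
noncomputable def heatPotential (ν : Measure E) (e : E) (t s : ℝ) : ℝ :=
  finrank ℝ E / 2 * log (4 * π * t) + s ^ 2 / (4 * t) -
    log (axialMoment ν e 0 (s / (2 * t)) (1 / (4 * t)))

/-- The derivative of `heatPotential ν e t`. -/
noncomputable def heatSlope (ν : Measure E) (e : E) (t s : ℝ) : ℝ :=
  (s - axialMean ν e (s / (2 * t)) (1 / (4 * t))) / (2 * t)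

/-- The second derivative of `heatPotential ν e t`. -/
noncomputable def heatCurvature (ν : Measure E) (e : E) (t s : ℝ) : ℝ :=
  1 / (2 * t) - axialVariance ν e (s / (2 * t)) (1 / (4 * t)) / (4 * t ^ 2)

variable [BorelSpace E] [FiniteDimensional ℝ E] [NeZero ν]

theorem IsRotationInvariant.hasStrictFDerivAt_heatPotential (hν : IsRotationInvariant ν)
    (he : ‖e‖ = 1) (h : TiltableAt ν ((s / (2 * t)) • e, 1 / (4 * t))) (ht : 0 < t) (hs : 0 < s) :
    HasStrictFDerivAt (fun p : ℝ × ℝ => heatPotential ν e p.1 p.2)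
      ((-heatSlope ν e t s ^ 2 + heatCurvature ν e t s +
        (finrank ℝ E - 1) * heatSlope ν e t s / s) • .fst ℝ ℝ ℝ +
          heatSlope ν e t s • .snd ℝ ℝ ℝ) (t, s) := by
  have hfst := hasStrictFDerivAt_fst (𝕜 := ℝ) (E := ℝ) (F := ℝ) (p := (t, s))
  have hsnd := hasStrictFDerivAt_snd (𝕜 := ℝ) (E := ℝ) (F := ℝ) (p := (t, s))
  have hinv : HasStrictFDerivAt (fun p : ℝ × ℝ => p.1⁻¹) _ (t, s) :=
    (hasStrictDerivAt_inv ht.ne').comp_hasStrictFDerivAt (t, s) hfst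
  have hparam := ((hsnd.mul hinv).const_mul 2⁻¹).prodMk (hinv.const_mul 4⁻¹)
  have hparam_eq : (2⁻¹ * (s * t⁻¹), 4⁻¹ * t⁻¹) = (s / (2 * t), 1 / (4 * t)) := by
    ext <;> field_simp
  have hlog := HasStrictFDerivAt.comp (t, s)
    (hparam_eq ▸ hν.hasStrictFDerivAt_log_axialMoment he (by positivity) h) hparam
  have hquad := (hsnd.pow 2).mul (hinv.const_mul 4⁻¹)
  have hnorm := ((hfst.const_mul (4 * π)).log (by positivity)).const_mul (finrank ℝ E / 2 : ℝ)
  have hfun : (fun p : ℝ × ℝ => heatPotential ν e p.1 p.2) = fun p =>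
      finrank ℝ E / 2 * log (4 * π * p.1) + p.2 ^ 2 * (4⁻¹ * p.1⁻¹) -
        log (axialMoment ν e 0 (2⁻¹ * (p.2 * p.1⁻¹)) (4⁻¹ * p.1⁻¹)) := by
    ext p
    simp only [heatPotential, div_eq_mul_inv, mul_inv, one_mul, mul_left_comm (2⁻¹ : ℝ)]
  rw [hfun]
  refine ((hnorm.add hquad).sub hlog).congr_fderiv ?_
  ext <;> simp only [ContinuousLinearMap.comp_apply, ContinuousLinearMap.inl_apply,
    ContinuousLinearMap.inr_apply, ContinuousLinearMap.prod_apply, ContinuousLinearMap.coe_fst',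
    ContinuousLinearMap.coe_snd', add_apply, sub_apply,
    smul_apply, smul_eq_mul, nsmul_eq_mul, Nat.cast_ofNat, pow_one,
    Nat.add_one_sub_one, heatSlope, heatCurvature]
  all_goals
    field_simp
    ring

theorem hasDerivAt_heatSlope (h : TiltableAt ν ((s / (2 * t)) • e, 1 / (4 * t))) :
    HasDerivAt (heatSlope ν e t) (heatCurvature ν e t s) s := by
  have hmean : HasDerivAt (fun s => axialMean ν e (s / (2 * t)) (1 / (4 * t)))
      (axialVariance ν e (s / (2 * t)) (1 / (4 * t)) * (1 / (2 * t))) s :=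
    HasDerivAt.comp (h₂ := fun a => axialMean ν e a (1 / (4 * t))) (h := fun s => s / (2 * t)) s
      (hasDerivAt_axialMean h) ((hasDerivAt_id s).div_const (2 * t))
  refine (((hasDerivAt_id s).sub hmean).div_const (2 * t)).congr_deriv ?_
  rw [heatCurvature]
  ring

theorem continuousAt_heatSlope_time (ht : 0 < t)
    (h : TiltableAt ν ((s / (2 * t)) • e, 1 / (4 * t))) :
    ContinuousAt (fun t => heatSlope ν e t s) t := by
  have hc : ContinuousAt (fun t : ℝ => (s / (2 * t), 1 / (4 * t))) t := by
    fun_prop (disch := positivity)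
  exact (continuousAt_const.sub ((h.continuousAt_axialMoment hc 1).div
    (h.continuousAt_axialMoment hc 0) h.axialMoment_zero_pos.ne')).div (by fun_prop) (by positivity)

end HeatPotential

section Tiltable

variable {E : Type*} [NormedAddCommGroup E] [InnerProductSpace ℝ E]

theorem norm_gaussStat_le (y : E) : ‖gaussStat y‖ ≤ ‖y‖ + ‖y‖ ^ 2 := by
  refine ContinuousLinearMap.opNorm_le_bound _ (by positivity) fun θ => ?_
  rw [gaussStat_apply, add_mul, mul_comm (‖y‖ ^ 2)]
  refine (norm_sub_le _ _).trans <| add_le_add ((norm_inner_le_norm _ _).trans ?_) ?_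
  · gcongr
    exact norm_fst_le θ
  · rw [norm_mul, norm_pow, norm_norm]
    gcongr
    exact norm_snd_le θ

variable [MeasurableSpace E] [BorelSpace E] [FiniteDimensional ℝ E] {ν : Measure E}

theorem tiltableAt_of_integrable_exp_neg_norm_sq
    (hν : ∀ ε > 0, Integrable (fun y => exp (-ε * ‖y‖ ^ 2)) ν) (v : E) {b : ℝ} (hb : 0 < b) :
    TiltableAt ν (v, b) := by
  refine .of_exp_mul_norm_le aestronglyMeasurable_gaussStat aestronglyMeasurable_one
    (half_pos hb) ((hν (b / 4) (by positivity)).const_mul (exp ((‖v‖ + b / 2) ^ 2 / b)))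
    (.of_forall fun y => ?_)
  have hinner : ⟪y, v⟫ ≤ ‖v‖ * ‖y‖ := (real_inner_le_norm y v).trans_eq (mul_comm _ _)
  have hnorm : b / 2 * ‖gaussStat y‖ ≤ b / 2 * (‖y‖ + ‖y‖ ^ 2) := by
    gcongr
    exact norm_gaussStat_le y
  have hsquare : 0 ≤ b / 4 * (‖y‖ - 2 * (‖v‖ + b / 2) / b) ^ 2 := by positivity
  have hexpand : b / 4 * (‖y‖ - 2 * (‖v‖ + b / 2) / b) ^ 2 =
      b / 4 * ‖y‖ ^ 2 - (‖v‖ + b / 2) * ‖y‖ + (‖v‖ + b / 2) ^ 2 / b := by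
    field_simp
    ring
  rw [Pi.one_apply, norm_one, mul_one, ← exp_add, gaussStat_apply]
  exact exp_le_exp.2 (by linarith)

theorem tiltableAt_of_ae_norm_le [IsFiniteMeasure ν] {C : ℝ} (hν : ∀ᵐ y ∂ν, ‖y‖ ≤ C)
    (θ : E × ℝ) : TiltableAt ν θ := by
  refine .of_exp_mul_norm_le aestronglyMeasurable_gaussStat aestronglyMeasurable_one
    one_pos (integrable_const (exp ((C + C ^ 2) * ‖θ‖ + (C + C ^ 2)))) (hν.mono fun y hy => ?_)
  have hnorm : ‖gaussStat y‖ ≤ C + C ^ 2 := (norm_gaussStat_le y).trans (by gcongr)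
  rw [Pi.one_apply, norm_one, mul_one, one_mul]
  gcongr
  exact (le_abs_self _).trans ((gaussStat y).le_of_opNorm_le hnorm θ)

end Tiltable

section PolarCoordinates

open Module

theorem measurableEmbedding_coe_sphere {E : Type*} [NormedAddCommGroup E] [MeasurableSpace E]
    [BorelSpace E] : MeasurableEmbedding ((↑) : Metric.sphere (0 : E) 1 → E) :=
  .subtype_coe Metric.isClosed_sphere.measurableSet

variable {E : Type*} [NormedAddCommGroup E] [InnerProductSpace ℝ E] [MeasurableSpace E]
  [BorelSpace E] [FiniteDimensional ℝ E]

/-- The surface measure of the unit sphere, as a measure on the ambient space. -/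
noncomputable def sphereMeasure (E : Type*) [NormedAddCommGroup E] [InnerProductSpace ℝ E]
    [MeasurableSpace E] [BorelSpace E] [FiniteDimensional ℝ E] : Measure E :=
  (volume : Measure E).toSphere.map (↑)

instance : IsFiniteMeasure (sphereMeasure E) := Measure.isFiniteMeasure_map _ _

instance [Nontrivial E] : NeZero (sphereMeasure E) :=
  ⟨(Measure.map_ne_zero_iff (by fun_prop)).2 (volume : Measure E).toSphere_ne_zero⟩

theorem ae_sphereMeasure_norm_eq_one : ∀ᵐ ω ∂sphereMeasure E, ‖ω‖ = 1 :=
  measurableEmbedding_coe_sphere.ae_map_iff.2 (.of_forall norm_eq_of_mem_sphere)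

open scoped Pointwise in
theorem isRotationInvariant_sphereMeasure : IsRotationInvariant (sphereMeasure E) := fun R => by
  refine ⟨R.continuous.measurable, Measure.ext fun s hs => ?_⟩
  have hsphere : ∀ s, MeasurableSet s → sphereMeasure E s =
      finrank ℝ E * volume (Ioo (0 : ℝ) 1 • (s ∩ Metric.sphere (0 : E) 1)) := fun s hs => by
    rw [sphereMeasure, measurableEmbedding_coe_sphere.map_apply,
      Measure.toSphere_apply' _ (hs.preimage measurable_subtype_coe),
      Subtype.image_preimage_coe, inter_comm]
  have hcone : Ioo (0 : ℝ) 1 • (R ⁻¹' s ∩ Metric.sphere (0 : E) 1) =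
      R ⁻¹' (Ioo (0 : ℝ) 1 • (s ∩ Metric.sphere (0 : E) 1)) := by
    ext x
    simp only [mem_preimage, Set.mem_smul, mem_inter_iff, mem_sphere_zero_iff_norm]
    refine ⟨?_, ?_⟩
    · rintro ⟨ρ, hρ, ω, ⟨hω, hω1⟩, rfl⟩
      exact ⟨ρ, hρ, R ω, ⟨hω, by rw [R.norm_map, hω1]⟩, (R.map_smul ρ ω).symm⟩
    · rintro ⟨ρ, hρ, ω, ⟨hω, hω1⟩, hx⟩
      exact ⟨ρ, hρ, R.symm ω, ⟨by rwa [R.apply_symm_apply], by rw [R.symm.norm_map, hω1]⟩,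
        R.injective (by rw [R.map_smul, R.apply_symm_apply, hx])⟩
  rw [Measure.map_apply R.continuous.measurable hs, hsphere _ (R.continuous.measurable hs),
    hsphere _ hs, hcone,
    R.measurePreserving.measure_preimage_emb R.toHomeomorph.measurableEmbedding]

theorem integrable_volumeIoiPow_iff {d : ℕ} {f : ℝ → ℝ} :
    Integrable (fun ρ : Ioi (0 : ℝ) => f ρ) (Measure.volumeIoiPow d) ↔
      IntegrableOn (fun ρ => ρ ^ d * f ρ) (Ioi 0) := by
  rw [Measure.volumeIoiPow, integrable_withDensity_iff_integrable_smul' (by fun_prop)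
    (.of_forall fun _ => ENNReal.ofReal_lt_top),
    integrableOn_iff_comap_subtypeVal measurableSet_Ioi]
  refine integrable_congr (.of_forall fun ρ => ?_)
  simp [ENNReal.toReal_ofReal (pow_nonneg (mem_Ioi.1 ρ.2).le d)]

theorem integral_volumeIoiPow (d : ℕ) (f : ℝ → ℝ) :
    ∫ ρ : Ioi (0 : ℝ), f ρ ∂Measure.volumeIoiPow d = ∫ ρ in Ioi 0, ρ ^ d * f ρ := by
  rw [Measure.volumeIoiPow, integral_withDensity_eq_integral_toReal_smul (by fun_prop)
    (.of_forall fun _ => ENNReal.ofReal_lt_top), ← integral_subtype_comap measurableSet_Ioi]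
  refine integral_congr_ae (.of_forall fun ρ => ?_)
  simp [ENNReal.toReal_ofReal (pow_nonneg (mem_Ioi.1 ρ.2).le d)]

theorem integrableOn_polar_and_integral_eq {d : ℕ} (hd : finrank ℝ E = d + 1) {f : E → ℝ}
    (hf : Integrable f) :
    IntegrableOn (fun ρ => ρ ^ d * ∫ ω, f (ρ • ω) ∂sphereMeasure E) (Ioi 0) ∧
      ∫ y, f y = ∫ ρ in Ioi 0, ρ ^ d * ∫ ω, f (ρ • ω) ∂sphereMeasure E := by
  obtain rfl : d = finrank ℝ E - 1 := by rw [hd, Nat.add_sub_cancel]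
  have : Nontrivial E := nontrivial_of_finrank_pos (R := ℝ) (hd ▸ Nat.succ_pos _)
  have hpolar := (volume : Measure E).measurePreserving_homeomorphUnitSphereProd
  have hemb := (homeomorphUnitSphereProd E).measurableEmbedding
  let F : Metric.sphere (0 : E) 1 × Ioi (0 : ℝ) → ℝ := fun z => f (z.2.1 • z.1.1)
  have hF : F ∘ homeomorphUnitSphereProd E = f ∘ (↑) := by
    ext x
    simp [F, smul_smul, norm_ne_zero_iff.2 x.2]
  have hcompl : MeasurableSet ({0}ᶜ : Set E) := (measurableSet_singleton 0).compl
  have hF_int : Integrable F _ := (hpolar.integrable_comp_emb hemb).1 <| by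
    rw [hF, ← integrableOn_iff_comap_subtypeVal hcompl]
    exact hf.integrableOn
  have hsphere : ∀ ρ : ℝ, ∫ ω, f (ρ • ω) ∂sphereMeasure E =
      ∫ ω : Metric.sphere (0 : E) 1, f (ρ • ω.1) ∂(volume : Measure E).toSphere := fun ρ =>
    measurableEmbedding_coe_sphere.integral_map _
  simp only [hsphere, ← integrable_volumeIoiPow_iff, ← integral_volumeIoiPow]
  refine ⟨hF_int.integral_prod_right, ?_⟩
  rw [← integral_prod_symm F hF_int, ← hpolar.integral_comp hemb]
  conv_lhs =>
    rw [← restrict_compl_singleton (μ := volume) (0 : E), ← integral_subtype_comap hcompl f]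
  exact congrArg _ hF.symm

end PolarCoordinates

section GibbsMeasure

open Module

variable {E : Type*} [NormedAddCommGroup E] [InnerProductSpace ℝ E] [MeasurableSpace E]
  [BorelSpace E] [FiniteDimensional ℝ E] {ψ : ℝ → ℝ}

/-- The measure on `E` with the radial density `exp (-ψ ‖y‖)`. -/
noncomputable def gibbsMeasure (E : Type*) [NormedAddCommGroup E] [InnerProductSpace ℝ E]
    [MeasurableSpace E] [BorelSpace E] [FiniteDimensional ℝ E] (ψ : ℝ → ℝ) : Measure E :=
  volume.withDensity fun y => ENNReal.ofReal (exp (-ψ ‖y‖))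

theorem integrable_gibbsMeasure_iff (hψ : Measurable ψ) {f : E → ℝ} :
    Integrable f (gibbsMeasure E ψ) ↔ Integrable fun y => exp (-ψ ‖y‖) * f y := by
  rw [gibbsMeasure, integrable_withDensity_iff_integrable_smul' (by fun_prop)
    (.of_forall fun _ => ENNReal.ofReal_lt_top)]
  simp only [ENNReal.toReal_ofReal (exp_nonneg _), smul_eq_mul]

theorem integral_gibbsMeasure (hψ : Measurable ψ) (f : E → ℝ) :
    ∫ y, f y ∂gibbsMeasure E ψ = ∫ y, exp (-ψ ‖y‖) * f y := by
  rw [gibbsMeasure, integral_withDensity_eq_integral_toReal_smul (by fun_prop)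
    (.of_forall fun _ => ENNReal.ofReal_lt_top)]
  simp only [ENNReal.toReal_ofReal (exp_nonneg _), smul_eq_mul]

theorem neZero_gibbsMeasure (hψ : Measurable ψ) : NeZero (gibbsMeasure E ψ) := by
  refine ⟨fun h => NeZero.ne (volume : Measure E) (ae_eq_bot.1 ?_)⟩
  rw [gibbsMeasure, withDensity_eq_zero_iff (by fun_prop)] at h
  simpa [EventuallyEq, (exp_pos _).not_ge] using h

theorem isRotationInvariant_gibbsMeasure : IsRotationInvariant (gibbsMeasure E ψ) := fun R => by
  refine ⟨R.continuous.measurable, Measure.ext fun s hs => ?_⟩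
  rw [Measure.map_apply R.continuous.measurable hs, gibbsMeasure,
    withDensity_apply _ (R.continuous.measurable hs), withDensity_apply _ hs,
    ← R.measurePreserving.setLIntegral_comp_preimage_emb R.toHomeomorph.measurableEmbedding _ s]
  simp only [R.norm_map]

theorem tiltableAt_gibbsMeasure (hψ : Monotone ψ) (v : E) {b : ℝ} (hb : 0 < b) :
    TiltableAt (gibbsMeasure E ψ) (v, b) := by
  refine tiltableAt_of_integrable_exp_neg_norm_sq (fun ε hε => ?_) v hb
  rw [integrable_gibbsMeasure_iff hψ.measurable]
  have hgauss : Integrable fun y : E => exp (-ε * ‖y‖ ^ 2) :=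
    .of_integral_ne_zero (by
      rw [GaussianFourier.integral_rexp_neg_mul_sq_norm hε]
      positivity)
  have hmeas : Measurable fun y : E => exp (-ψ ‖y‖) :=
    measurable_exp.comp (hψ.measurable.comp measurable_norm).neg
  refine hgauss.bdd_mul (c := exp (-ψ 0)) hmeas.aestronglyMeasurable (.of_forall fun y => ?_)
  rw [norm_eq_abs, abs_exp]
  exact exp_le_exp.2 (neg_le_neg (hψ (norm_nonneg y)))

end GibbsMeasure

section SphericalMoment

open Module

variable {E : Type*} [NormedAddCommGroup E] [InnerProductSpace ℝ E] [MeasurableSpace E]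
  {ν : Measure E} {e : E} {a κ ρ : ℝ}

theorem abs_axialMoment_le [IsFiniteMeasure ν] (hsphere : ∀ᵐ ω ∂ν, ‖ω‖ = 1) (he : ‖e‖ = 1) (k : ℕ)
    (κ : ℝ) :
    |axialMoment ν e k κ 0| ≤ exp |κ| * ν.real univ := by
  refine norm_integral_le_of_norm_le_const (G := ℝ) (hsphere.mono fun ω hω => ?_)
  have hinner : |⟪ω, e⟫| ≤ 1 := (abs_real_inner_le_norm ω e).trans_eq (by rw [hω, he, one_mul])
  have harg : κ * ⟪ω, e⟫ ≤ |κ| := (le_abs_self _).trans <| by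
    rw [abs_mul]
    exact mul_le_of_le_one_right (abs_nonneg κ) hinner
  rw [norm_mul, norm_pow, norm_eq_abs, abs_exp, zero_mul, sub_zero, norm_eq_abs]
  exact (mul_le_of_le_one_right (exp_nonneg _) (pow_le_one₀ (abs_nonneg _) hinner)).trans
    (exp_le_exp.2 harg)

variable [BorelSpace E]

theorem IsRotationInvariant.axialMoment_one_zero (hν : IsRotationInvariant ν) (b : ℝ) :
    axialMoment ν e 1 0 b = 0 := by
  rw [axialMoment_eq_tiltedIntegral, zero_smul]
  simpa only [pow_one] using hν.tiltedIntegral_inner_eq_zero (inner_zero_right e) b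

variable [FiniteDimensional ℝ E] [IsFiniteMeasure ν]

theorem tiltableAt_of_ae_norm_eq_one (hsphere : ∀ᵐ ω ∂ν, ‖ω‖ = 1) (θ : E × ℝ) : TiltableAt ν θ :=
  tiltableAt_of_ae_norm_le (hsphere.mono fun _ => le_of_eq) θ

theorem IsRotationInvariant.mul_axialMoment_two_add (hν : IsRotationInvariant ν)
    (hsphere : ∀ᵐ ω ∂ν, ‖ω‖ = 1) (he : ‖e‖ = 1) (κ : ℝ) :
    κ * axialMoment ν e 2 κ 0 + (finrank ℝ E - 1) * axialMoment ν e 1 κ 0 =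
      κ * axialMoment ν e 0 κ 0 := by
  rcases eq_or_ne κ 0 with rfl | hκ
  · rw [hν.axialMoment_one_zero]
    ring
  have hnorm : axialMoment ν e 0 κ 0 = tiltedIntegral ν (fun y => ‖y‖ ^ 2) (κ • e, 0) := by
    rw [axialMoment_eq_tiltedIntegral]
    exact integral_congr_ae (hsphere.mono fun ω hω => by simp only [hω, pow_zero, one_pow])
  rw [hnorm, hν.tiltedIntegral_norm_sq_eq he hκ (tiltableAt_of_ae_norm_eq_one hsphere _)]
  field_simp

theorem hasDerivAt_axialMoment_mul_left (hsphere : ∀ᵐ ω ∂ν, ‖ω‖ = 1) (k : ℕ) (a ρ : ℝ) :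
    HasDerivAt (fun ρ => axialMoment ν e k (a * ρ) 0) (axialMoment ν e (k + 1) (a * ρ) 0 * a) ρ :=
  HasDerivAt.comp (h₂ := fun κ => axialMoment ν e k κ 0) (h := fun ρ => a * ρ) ρ
    (tiltableAt_of_ae_norm_eq_one hsphere _).hasDerivAt_axialMoment
    (by simpa using (hasDerivAt_id ρ).const_mul a)

theorem IsRotationInvariant.hasDerivAt_pow_mul_axialMoment_one (hν : IsRotationInvariant ν)
    (hsphere : ∀ᵐ ω ∂ν, ‖ω‖ = 1) (he : ‖e‖ = 1) {d : ℕ} (hd : finrank ℝ E = d + 1)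
    (hρ : ρ ≠ 0) :
    HasDerivAt (fun ρ => ρ ^ d * axialMoment ν e 1 (a * ρ) 0)
      (a * ρ ^ d * axialMoment ν e 0 (a * ρ) 0) ρ := by
  refine ((hasDerivAt_pow d ρ).mul
    (hasDerivAt_axialMoment_mul_left hsphere 1 a ρ)).congr_deriv (mul_left_cancel₀ hρ ?_)
  have hbessel := hν.mul_axialMoment_two_add hsphere he (a * ρ)
  rw [hd, Nat.cast_add_one, add_sub_cancel_right] at hbessel
  have hpow : d * (ρ ^ (d - 1) * ρ) = d * ρ ^ d := by
    rcases d with _ | d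
    · simp
    · rw [Nat.add_sub_cancel, pow_succ]
  linear_combination axialMoment ν e 1 (a * ρ) 0 * hpow + ρ ^ d * hbessel

theorem IsRotationInvariant.hasDerivAt_pow_mul_axialMoment_two (hν : IsRotationInvariant ν)
    (hsphere : ∀ᵐ ω ∂ν, ‖ω‖ = 1) (he : ‖e‖ = 1) {d : ℕ} (hd : finrank ℝ E = d + 1)
    (ha : a ≠ 0) (hρ : ρ ≠ 0) :
    HasDerivAt (fun ρ => ρ ^ (d + 1) * axialMoment ν e 2 (a * ρ) 0)
      (ρ ^ d * (axialMoment ν e 0 (a * ρ) 0 + a * ρ * axialMoment ν e 1 (a * ρ) 0)) ρ := by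
  have hfun : (fun ρ => ρ ^ (d + 1) * axialMoment ν e 2 (a * ρ) 0) = fun ρ =>
      ρ ^ (d + 1) * axialMoment ν e 0 (a * ρ) 0 - d / a *
        (ρ ^ d * axialMoment ν e 1 (a * ρ) 0) := by
    ext ρ
    have hbessel := hν.mul_axialMoment_two_add hsphere he (a * ρ)
    rw [hd, Nat.cast_add_one, add_sub_cancel_right] at hbessel
    field_simp
    linear_combination ρ ^ d * hbessel
  rw [hfun]
  refine (((hasDerivAt_pow (d + 1) ρ).mul (hasDerivAt_axialMoment_mul_left hsphere 0 a ρ)).sub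
    ((hν.hasDerivAt_pow_mul_axialMoment_one hsphere he hd hρ).const_mul _)).congr_deriv ?_
  rw [Nat.add_sub_cancel, Nat.cast_add_one]
  field_simp
  ring

variable [NeZero ν]

theorem axialMoment_sphere_zero_pos (hsphere : ∀ᵐ ω ∂ν, ‖ω‖ = 1) (κ : ℝ) :
    0 < axialMoment ν e 0 κ 0 :=
  (tiltableAt_of_ae_norm_eq_one hsphere _).axialMoment_zero_pos

theorem IsRotationInvariant.not_ae_inner_eq (hν : IsRotationInvariant ν)
    (hsphere : ∀ᵐ ω ∂ν, ‖ω‖ = 1) (he : ‖e‖ = 1) (m : ℝ) : ¬∀ᵐ ω ∂ν, ⟪ω, e⟫ = m := by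
  intro hm
  have hmoment : ∀ κ, axialMoment ν e 1 κ 0 = m * axialMoment ν e 0 κ 0 ∧
      axialMoment ν e 2 κ 0 = m ^ 2 * axialMoment ν e 0 κ 0 := fun κ => by
    simp only [axialMoment, ← integral_const_mul]
    refine ⟨integral_congr_ae (hm.mono fun ω hω => ?_), integral_congr_ae (hm.mono fun ω hω => ?_)⟩
    all_goals
      simp only [hω]
      ring
  have hm0 : m = 0 := by
    have hzero := (hmoment 0).1
    rw [hν.axialMoment_one_zero] at hzero
    exact (mul_eq_zero.1 hzero.symm).resolve_right (axialMoment_sphere_zero_pos hsphere 0).ne'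
  have hbessel := hν.mul_axialMoment_two_add hsphere he 1
  rw [(hmoment 1).1, (hmoment 1).2, hm0] at hbessel
  have hpos := axialMoment_sphere_zero_pos (e := e) hsphere 1
  linarith

theorem IsRotationInvariant.axialVariance_sphere_pos (hν : IsRotationInvariant ν)
    (hsphere : ∀ᵐ ω ∂ν, ‖ω‖ = 1) (he : ‖e‖ = 1) (κ : ℝ) : 0 < axialVariance ν e κ 0 := by
  have htilt : TiltableAt ν (κ • e, 0) := tiltableAt_of_ae_norm_eq_one hsphere _
  refine pos_of_mul_pos_right (htilt.axialMoment_zero_mul_axialVariance ▸ ?_)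
    htilt.axialMoment_zero_pos.le
  have hnonneg : ∀ ω, 0 ≤ exp (κ * ⟪ω, e⟫ - 0 * ‖ω‖ ^ 2) * (⟪ω, e⟫ - axialMean ν e κ 0) ^ 2 :=
    fun ω => by positivity
  refine (integral_nonneg hnonneg).lt_of_ne' fun hzero =>
    hν.not_ae_inner_eq hsphere he (axialMean ν e κ 0) ?_
  rw [integral_eq_zero_iff_of_nonneg hnonneg (htilt.integrable_axial_sub_sq _)] at hzero
  filter_upwards [hzero] with ω hω
  simpa [(exp_pos _).ne', sub_eq_zero] using hω

theorem IsRotationInvariant.strictMono_axialMean_sphere (hν : IsRotationInvariant ν)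
    (hsphere : ∀ᵐ ω ∂ν, ‖ω‖ = 1) (he : ‖e‖ = 1) : StrictMono fun κ => axialMean ν e κ 0 :=
  strictMono_of_hasDerivAt_pos
    (fun _ => hasDerivAt_axialMean (tiltableAt_of_ae_norm_eq_one hsphere _))
    fun κ => hν.axialVariance_sphere_pos hsphere he κ

theorem IsRotationInvariant.axialMean_sphere_pos (hν : IsRotationInvariant ν)
    (hsphere : ∀ᵐ ω ∂ν, ‖ω‖ = 1) (he : ‖e‖ = 1) (hκ : 0 < κ) : 0 < axialMean ν e κ 0 := by
  have hzero : axialMean ν e 0 0 = 0 := by rw [axialMean, hν.axialMoment_one_zero, zero_div]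
  exact hzero.symm.trans_lt (hν.strictMono_axialMean_sphere hsphere he hκ)

end SphericalMoment

section RadialMoment

open Module

variable {E : Type*} [NormedAddCommGroup E] [InnerProductSpace ℝ E] [MeasurableSpace E]
  {d : ℕ} {b : ℝ} {ψ : ℝ → ℝ}

/-- The contribution of the sphere of radius `ρ` to the moment of order `k` of `⟪y, e⟫` under the
Gaussian tilt with parameter `(a • e, b)`, where `ν` is the surface measure of the unit sphere in
dimension `d + 1`. -/
noncomputable def radialMoment (ν : Measure E) (e : E) (d k : ℕ) (a b ρ : ℝ) : ℝ :=
  ρ ^ d * exp (-b * ρ ^ 2) * (ρ ^ k * axialMoment ν e k (a * ρ) 0)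

variable [BorelSpace E] [FiniteDimensional ℝ E]

theorem integrableOn_radialMoment_and_axialMoment_eq (hd : finrank ℝ E = d + 1) (hψ : Monotone ψ)
    (e : E) (k : ℕ) (a : ℝ) (hb : 0 < b) :
    IntegrableOn (fun ρ => radialMoment (sphereMeasure E) e d k a b ρ * exp (-ψ ρ)) (Ioi 0) ∧
      axialMoment (gibbsMeasure E ψ) e k a b =
        ∫ ρ in Ioi 0, radialMoment (sphereMeasure E) e d k a b ρ * exp (-ψ ρ) := by
  have hslice : ∀ ρ ∈ Ioi (0 : ℝ), ρ ^ d * ∫ ω, exp (-ψ ‖ρ • ω‖) *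
      (exp (a * ⟪ρ • ω, e⟫ - b * ‖ρ • ω‖ ^ 2) * ⟪ρ • ω, e⟫ ^ k) ∂sphereMeasure E =
      radialMoment (sphereMeasure E) e d k a b ρ * exp (-ψ ρ) := fun ρ hρ => by
    rw [radialMoment, axialMoment, ← integral_const_mul, ← integral_const_mul,
      ← integral_const_mul, ← integral_mul_const]
    refine integral_congr_ae ((ae_sphereMeasure_norm_eq_one (E := E)).mono fun ω hω => ?_)
    simp only [norm_smul, hω, norm_eq_abs, abs_of_pos (mem_Ioi.1 hρ), real_inner_smul_left,
      mul_one, mul_pow, zero_mul, sub_eq_add_neg, neg_zero, add_zero, exp_add, neg_mul, mul_assoc a]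
    ring
  have hpolar := integrableOn_polar_and_integral_eq hd ((integrable_gibbsMeasure_iff
    hψ.measurable).1 ((tiltableAt_gibbsMeasure (E := E) hψ (a • e) hb).integrable_axial k))
  rw [axialMoment, integral_gibbsMeasure hψ.measurable, hpolar.2]
  exact ⟨hpolar.1.congr_fun hslice measurableSet_Ioi,
    setIntegral_congr_fun measurableSet_Ioi hslice⟩

end RadialMoment

section RightDerivative

variable {f f' ψ φ W W' : ℝ → ℝ} {x₀ m : ℝ}

theorem tendsto_intervalIntegral_of_hasDerivWithinAt_Ioi (hcont : Continuous f)
    (hderiv : ∀ x ∈ Ioi x₀, HasDerivWithinAt f (f' x) (Ioi x) x)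
    (hint : ∀ R > x₀, IntegrableOn f' (Ioc x₀ R)) (hlim : Tendsto f atTop (𝓝 m)) :
    Tendsto (fun R => ∫ x in x₀..R, f' x) atTop (𝓝 (m - f x₀)) := by
  refine (hlim.sub_const (f x₀)).congr' ?_
  filter_upwards [Ioi_mem_atTop x₀] with R hR
  exact (intervalIntegral.integral_eq_sub_of_hasDeriv_right_of_le hR.le hcont.continuousOn
    (fun x hx => hderiv x hx.1) ((intervalIntegrable_iff_integrableOn_Ioc_of_le hR.le).2
      (hint R hR))).symm

theorem integrableOn_Ioi_of_hasDerivWithinAt_Ioi_of_nonneg (hcont : Continuous f)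
    (hderiv : ∀ x ∈ Ioi x₀, HasDerivWithinAt f (f' x) (Ioi x) x)
    (hnonneg : ∀ x ∈ Ioi x₀, 0 ≤ f' x) (hlim : Tendsto f atTop (𝓝 m)) :
    IntegrableOn f' (Ioi x₀) := by
  have hint : ∀ R > x₀, IntegrableOn f' (Ioc x₀ R) := fun R _ =>
    intervalIntegral.integrableOn_deriv_right_of_nonneg hcont.continuousOn
      (fun x hx => hderiv x hx.1) fun x hx => hnonneg x hx.1
  refine integrableOn_Ioi_of_intervalIntegral_norm_tendsto (m - f x₀) x₀ (fun R => ?_) tendsto_id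
    ((tendsto_intervalIntegral_of_hasDerivWithinAt_Ioi hcont hderiv hint hlim).congr' ?_)
  · rcases le_or_gt R x₀ with hR | hR
    · simp [Ioc_eq_empty hR.not_gt]
    · exact hint R hR
  · filter_upwards [Ioi_mem_atTop x₀] with R hR
    refine intervalIntegral.integral_congr_ae (.of_forall fun x hx => ?_)
    rw [uIoc_of_le hR.le] at hx
    exact (norm_of_nonneg (hnonneg x hx.1)).symm

theorem integral_Ioi_of_hasDerivWithinAt_Ioi_of_tendsto (hcont : Continuous f)
    (hderiv : ∀ x ∈ Ioi x₀, HasDerivWithinAt f (f' x) (Ioi x) x) (hint : IntegrableOn f' (Ioi x₀))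
    (hlim : Tendsto f atTop (𝓝 m)) : ∫ x in Ioi x₀, f' x = m - f x₀ :=
  tendsto_nhds_unique (intervalIntegral_tendsto_integral_Ioi x₀ hint tendsto_id)
    (tendsto_intervalIntegral_of_hasDerivWithinAt_Ioi hcont hderiv
      (fun _ _ => hint.mono_set Ioc_subset_Ioi_self) hlim)

theorem exists_monotone_hasDerivWithinAt_Ioi (hconv : ConvexOn ℝ univ ψ) (hmono : Monotone ψ)
    (htop : Tendsto ψ atTop atTop) :
    ∃ φ : ℝ → ℝ, Monotone φ ∧ (∀ x, 0 ≤ φ x) ∧ (∃ x, 0 < φ x) ∧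
      ∀ x, HasDerivWithinAt ψ (φ x) (Ioi x) x := by
  have hnonneg : ∀ x, 0 ≤ derivWithin ψ (Ioi x) x := fun x =>
    (hmono.monotoneOn _).derivWithin_nonneg
  refine ⟨fun x => derivWithin ψ (Ioi x) x, ?_, hnonneg, ?_, fun x =>
    hconv.hasDerivWithinAt_rightDeriv_of_mem_interior (by simp)⟩
  · simpa [monotoneOn_univ] using hconv.monotoneOn_rightDeriv
  · by_contra! hnonpos
    have hle : ∀ x, ψ x ≤ ψ 0 := fun x =>
      hconv.isMinOn_of_rightDeriv_eq_zero (by simp) ((hnonpos x).antisymm (hnonneg x)) (mem_univ 0)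
    obtain ⟨x, hx⟩ := (htop.eventually_gt_atTop (ψ 0)).exists
    exact hx.not_ge (hle x)

theorem integrableOn_mul_exp_neg (hψ : Continuous ψ) (hφ : ∀ x, 0 ≤ φ x)
    (hderiv : ∀ x, HasDerivWithinAt ψ (φ x) (Ioi x) x) (htop : Tendsto ψ atTop atTop) (x₀ : ℝ) :
    IntegrableOn (fun x => φ x * exp (-ψ x)) (Ioi x₀) := by
  refine integrableOn_Ioi_of_hasDerivWithinAt_Ioi_of_nonneg (f := fun x => -exp (-ψ x)) (m := 0)
    (by fun_prop) (fun x _ => ((hderiv x).fun_neg.exp.neg).congr_deriv (by ring))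
    (fun x _ => mul_nonneg (hφ x) (exp_nonneg _)) ?_
  simpa using (tendsto_exp_neg_atTop_nhds_zero.comp htop).neg

theorem integrableOn_and_integral_deriv_mul_exp_neg (hW : Continuous W)
    (hWderiv : ∀ x ∈ Ioi x₀, HasDerivAt W (W' x) x) (hWlim : Tendsto W atTop (𝓝 0))
    (hW₀ : W x₀ = 0) (hψ : Continuous ψ) (hφ : ∀ x, 0 ≤ φ x)
    (hderiv : ∀ x, HasDerivWithinAt ψ (φ x) (Ioi x) x) (htop : Tendsto ψ atTop atTop)
    (hint : IntegrableOn (fun x => W' x * exp (-ψ x)) (Ioi x₀)) :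
    IntegrableOn (fun x => W x * (φ x * exp (-ψ x))) (Ioi x₀) ∧
      ∫ x in Ioi x₀, W' x * exp (-ψ x) = ∫ x in Ioi x₀, W x * (φ x * exp (-ψ x)) := by
  obtain ⟨C, hC⟩ : ∃ C, ∀ x ∈ Ici x₀, ‖W x‖ ≤ C := by
    obtain ⟨R, hR⟩ := eventually_atTop.1 (hWlim.norm.eventually_le_const (by simp : ‖(0 : ℝ)‖ < 1))
    obtain ⟨C, hC⟩ := (isCompact_Icc (a := x₀) (b := R)).exists_bound_of_continuousOn
      hW.continuousOn
    refine ⟨max C 1, fun x hx => ?_⟩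
    rcases le_total x R with hxR | hxR
    · exact (hC x ⟨hx, hxR⟩).trans (le_max_left _ _)
    · exact (hR x hxR).trans (le_max_right _ _)
  have hWφ : IntegrableOn (fun x => W x * (φ x * exp (-ψ x))) (Ioi x₀) := by
    refine (integrableOn_mul_exp_neg hψ hφ hderiv htop x₀).bdd_mul (c := C)
      hW.aestronglyMeasurable ?_
    exact (ae_restrict_mem measurableSet_Ioi).mono fun x hx => hC x (mem_Ici.2 hx.le)
  refine ⟨hWφ, ?_⟩
  have hexp : Tendsto (fun x => exp (-ψ x)) atTop (𝓝 0) :=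
    tendsto_exp_neg_atTop_nhds_zero.comp htop
  have hFTC := integral_Ioi_of_hasDerivWithinAt_Ioi_of_tendsto (f := fun x => W x * exp (-ψ x))
    (m := 0) (by fun_prop)
    (fun x hx => ((hWderiv x hx).hasDerivWithinAt.mul (hderiv x).fun_neg.exp).congr_deriv
      (show _ = W' x * exp (-ψ x) - W x * (φ x * exp (-ψ x)) by ring))
    (hint.sub hWφ) (by simpa using hWlim.mul hexp)
  rw [integral_sub hint hWφ, hW₀, zero_mul, sub_zero] at hFTC
  exact sub_eq_zero.1 hFTC

end RightDerivative

section VarianceBound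

open Module

variable {E : Type*} [NormedAddCommGroup E] [InnerProductSpace ℝ E] [MeasurableSpace E]
  {ν : Measure E} {e : E} {d : ℕ} {a b c ρ : ℝ} {φ ψ : ℝ → ℝ}

/-- The primitive, up to a multiple of `⟪y, e⟫ - c`, of the radial density of
`1 - 2 * b * (⟪y, e⟫ - c) ^ 2`: integrating it by parts against `exp (-ψ ρ)` compares the tilted
variance of `⟪y, e⟫` with its Gaussian value `1 / (2 * b)`. -/
noncomputable def radialFlux (ν : Measure E) (e : E) (d : ℕ) (a b c ρ : ℝ) : ℝ :=
  exp (-b * ρ ^ 2) *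
    (ρ ^ (d + 1) * axialMoment ν e 2 (a * ρ) 0 - c * (ρ ^ d * axialMoment ν e 1 (a * ρ) 0))

theorem setIntegral_Ioi_zero_pos {f : ℝ → ℝ} {x₁ : ℝ} (hf : IntegrableOn f (Ioi 0))
    (hnonneg : ∀ x ∈ Ioi (0 : ℝ), 0 ≤ f x) (hpos : ∀ x ∈ Ioi (0 : ℝ), x₁ < x → 0 < f x) :
    0 < ∫ x in Ioi 0, f x := by
  rw [setIntegral_pos_iff_support_of_nonneg_ae
    ((ae_restrict_mem measurableSet_Ioi).mono hnonneg) hf]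
  refine (?_ : 0 < volume (Ioi (max 0 x₁))).trans_le (measure_mono fun x hx => ?_)
  · simp
  · obtain ⟨hx₀, hx₁⟩ := max_lt_iff.1 (mem_Ioi.1 hx)
    exact ⟨(hpos x hx₀ hx₁).ne', hx₀⟩

theorem IsRotationInvariant.radialFlux_zero [BorelSpace E] (hν : IsRotationInvariant ν) :
    radialFlux ν e d a b c 0 = 0 := by
  simp [radialFlux, hν.axialMoment_one_zero]

variable [IsFiniteMeasure ν]

theorem tendsto_radialFlux (hsphere : ∀ᵐ ω ∂ν, ‖ω‖ = 1) (he : ‖e‖ = 1) (hb : 0 < b) :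
    Tendsto (radialFlux ν e d a b c) atTop (𝓝 0) := by
  have hterm : ∀ j k : ℕ, Tendsto (fun ρ => exp (-b * ρ ^ 2) *
      (ρ ^ j * axialMoment ν e k (a * ρ) 0)) atTop (𝓝 0) := fun j k => by
    have hdecay := (rexp_neg_quadratic_isLittleO_rpow_atTop (neg_lt_zero.2 hb) |a|
      (-j)).tendsto_div_nhds_zero.mul_const (ν.real univ)
    rw [zero_mul] at hdecay
    refine squeeze_zero_norm' ?_ hdecay
    filter_upwards [eventually_gt_atTop (0 : ℝ)] with ρ hρ
    have hbound := abs_axialMoment_le hsphere he k (a * ρ)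
    rw [abs_mul, abs_of_pos (a := ρ) hρ] at hbound
    rw [norm_mul, norm_mul, norm_pow, norm_eq_abs, norm_eq_abs, norm_eq_abs, abs_exp,
      abs_of_pos (a := ρ) hρ, rpow_neg hρ.le, rpow_natCast, div_inv_eq_mul, exp_add]
    calc exp (-b * ρ ^ 2) * (ρ ^ j * |axialMoment ν e k (a * ρ) 0|)
        ≤ exp (-b * ρ ^ 2) * (ρ ^ j * (exp (|a| * ρ) * ν.real univ)) := by
          have := hρ.le
          gcongr
      _ = exp (-b * ρ ^ 2) * exp (|a| * ρ) * ρ ^ j * ν.real univ := by ring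
  have hsum := (hterm (d + 1) 2).sub ((hterm d 1).const_mul c)
  rw [mul_zero, sub_zero] at hsum
  refine hsum.congr fun ρ => ?_
  rw [radialFlux]
  ring

variable [BorelSpace E] [FiniteDimensional ℝ E]

theorem continuous_radialFlux (hsphere : ∀ᵐ ω ∂ν, ‖ω‖ = 1) :
    Continuous (radialFlux ν e d a b c) :=
  have hcont : ∀ k, Continuous fun ρ => axialMoment ν e k (a * ρ) 0 := fun k =>
    continuous_iff_continuousAt.2 fun ρ =>
      (hasDerivAt_axialMoment_mul_left hsphere k a ρ).continuousAt
  (by fun_prop : Continuous fun ρ => exp (-b * ρ ^ 2)).mul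
    (((continuous_pow (d + 1)).mul (hcont 2)).sub
      (((continuous_pow d).mul (hcont 1)).const_mul c))

theorem IsRotationInvariant.hasDerivAt_radialFlux (hν : IsRotationInvariant ν)
    (hsphere : ∀ᵐ ω ∂ν, ‖ω‖ = 1) (he : ‖e‖ = 1) (hd : finrank ℝ E = d + 1) (ha : a ≠ 0)
    (hρ : ρ ≠ 0) :
    HasDerivAt (radialFlux ν e d a b c)
      (radialMoment ν e d 0 a b ρ +
        a * (radialMoment ν e d 1 a b ρ - c * radialMoment ν e d 0 a b ρ) -
        2 * b * (radialMoment ν e d 2 a b ρ - c * radialMoment ν e d 1 a b ρ)) ρ := by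
  have hgauss : HasDerivAt (fun ρ => exp (-b * ρ ^ 2)) (exp (-b * ρ ^ 2) * (-b * (2 * ρ))) ρ := by
    simpa using ((hasDerivAt_pow 2 ρ).const_mul (-b)).exp
  refine (hgauss.mul ((hν.hasDerivAt_pow_mul_axialMoment_two hsphere he hd ha hρ).sub
    ((hν.hasDerivAt_pow_mul_axialMoment_one hsphere he hd hρ).const_mul c))).congr_deriv ?_
  simp only [radialMoment, Pi.sub_apply]
  ring

variable [NeZero ν]

theorem IsRotationInvariant.exists_mul_axialMean_sphere_eq (hν : IsRotationInvariant ν)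
    (hsphere : ∀ᵐ ω ∂ν, ‖ω‖ = 1) (he : ‖e‖ = 1) (ha : 0 < a) (hc : 0 < c) :
    ∃ ρ > 0, ρ * axialMean ν e (a * ρ) 0 = c := by
  have hmean : 0 < axialMean ν e a 0 := hν.axialMean_sphere_pos hsphere he ha
  have hcont : Continuous fun ρ => ρ * axialMean ν e (a * ρ) 0 := by
    have hcont' : Continuous fun κ => axialMean ν e κ 0 := continuous_iff_continuousAt.2 fun κ =>
      (hasDerivAt_axialMean (tiltableAt_of_ae_norm_eq_one hsphere _)).continuousAt
    fun_prop
  set R : ℝ := max 1 (c / axialMean ν e a 0)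
  have hR : 1 ≤ R := le_max_left _ _
  have hlarge : c ≤ R * axialMean ν e (a * R) 0 :=
    calc c ≤ R * axialMean ν e a 0 := (div_le_iff₀ hmean).1 (le_max_right _ _)
      _ ≤ R * axialMean ν e (a * R) 0 := mul_le_mul_of_nonneg_left
          ((hν.strictMono_axialMean_sphere hsphere he).monotone
            (le_mul_of_one_le_right ha.le hR)) (zero_le_one.trans hR)
  obtain ⟨ρ, hρ, hρc⟩ := intermediate_value_Icc (zero_le_one.trans hR) hcont.continuousOn
    ⟨by simpa using hc.le, hlarge⟩
  refine ⟨ρ, hρ.1.lt_of_ne' ?_, hρc⟩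
  rintro rfl
  exact hc.ne (by simpa using hρc)

-- Chebyshev's correlation argument: both factors increase in `ρ` and vanish at the same radius.
theorem IsRotationInvariant.exists_forall_mul_axialMean_sub_nonneg (hν : IsRotationInvariant ν)
    (hsphere : ∀ᵐ ω ∂ν, ‖ω‖ = 1) (he : ‖e‖ = 1) (ha : 0 < a) (hc : 0 < c)
    (hφmono : Monotone φ) (hφ : ∀ x, 0 ≤ φ x) :
    ∃ K, ∀ ρ > 0,
      0 ≤ (φ ρ * axialMean ν e (a * ρ) 0 - K) * (ρ * axialMean ν e (a * ρ) 0 - c) := by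
  set mean : ℝ → ℝ := fun ρ => axialMean ν e (a * ρ) 0
  obtain ⟨ρ₀, hρ₀, hρ₀c⟩ := hν.exists_mul_axialMean_sphere_eq hsphere he ha hc
  have hmean_nonneg : ∀ ρ ∈ Ioi (0 : ℝ), 0 ≤ mean ρ := fun ρ hρ =>
    (hν.axialMean_sphere_pos hsphere he (mul_pos ha hρ)).le
  have hmean_mono : MonotoneOn mean (Ioi 0) := fun x _ y _ hxy =>
    (hν.strictMono_axialMean_sphere hsphere he).monotone (by gcongr)
  have hmonovary : MonovaryOn (fun ρ => φ ρ * mean ρ) (fun ρ => ρ * mean ρ) (Ioi 0) :=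
    ((hφmono.monotoneOn _).mul hmean_mono (fun ρ _ => hφ ρ) hmean_nonneg).monovaryOn
      (monotoneOn_id.mul hmean_mono (fun ρ hρ => hρ.le) hmean_nonneg)
  refine ⟨φ ρ₀ * mean ρ₀, fun ρ hρ => ?_⟩
  have hcorrelation := monovaryOn_iff_forall_mul_nonneg.1 hmonovary hρ₀ hρ
  rwa [hρ₀c] at hcorrelation

theorem radialMoment_zero_pos (hsphere : ∀ᵐ ω ∂ν, ‖ω‖ = 1) (hρ : 0 < ρ) :
    0 < radialMoment ν e d 0 a b ρ := by
  have hpos := axialMoment_sphere_zero_pos (e := e) hsphere (a * ρ)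
  rw [radialMoment]
  positivity

theorem radialFlux_mul_sub_eq (hsphere : ∀ᵐ ω ∂ν, ‖ω‖ = 1) (x K : ℝ) :
    radialFlux ν e d a b c ρ * x -
        K * (radialMoment ν e d 1 a b ρ - c * radialMoment ν e d 0 a b ρ) =
      radialMoment ν e d 0 a b ρ * (ρ * x * axialVariance ν e (a * ρ) 0 +
        (x * axialMean ν e (a * ρ) 0 - K) * (ρ * axialMean ν e (a * ρ) 0 - c)) := by
  have htilt : TiltableAt ν ((a * ρ) • e, 0) := tiltableAt_of_ae_norm_eq_one hsphere _
  simp only [radialFlux, radialMoment, htilt.axialMoment_one_eq, htilt.axialMoment_two_eq]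
  ring

theorem IsRotationInvariant.integral_radialFlux_mul_pos (hν : IsRotationInvariant ν)
    (hsphere : ∀ᵐ ω ∂ν, ‖ω‖ = 1) (he : ‖e‖ = 1) (ha : 0 < a) (hc : 0 < c)
    (hφmono : Monotone φ) (hφ : ∀ x, 0 ≤ φ x) (hφpos : ∃ x, 0 < φ x)
    (hflux : IntegrableOn (fun ρ => radialFlux ν e d a b c ρ * (φ ρ * exp (-ψ ρ))) (Ioi 0))
    (hcenter : IntegrableOn (fun ρ => (radialMoment ν e d 1 a b ρ -
      c * radialMoment ν e d 0 a b ρ) * exp (-ψ ρ)) (Ioi 0))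
    (hcenter_zero : ∫ ρ in Ioi 0, (radialMoment ν e d 1 a b ρ -
      c * radialMoment ν e d 0 a b ρ) * exp (-ψ ρ) = 0) :
    0 < ∫ ρ in Ioi 0, radialFlux ν e d a b c ρ * (φ ρ * exp (-ψ ρ)) := by
  obtain ⟨K, hchebyshev⟩ :=
    hν.exists_forall_mul_axialMean_sub_nonneg hsphere he ha hc hφmono hφ
  obtain ⟨ρ₁, hρ₁⟩ := hφpos
  have hweight : ∀ ρ > 0, 0 < radialMoment ν e d 0 a b ρ * exp (-ψ ρ) := fun ρ hρ =>
    mul_pos (radialMoment_zero_pos hsphere hρ) (exp_pos _)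
  have hvar : ∀ ρ > 0, 0 < ρ * axialVariance ν e (a * ρ) 0 := fun ρ hρ =>
    mul_pos hρ (hν.axialVariance_sphere_pos hsphere he _)
  have hdecomp : ∀ ρ, radialFlux ν e d a b c ρ * (φ ρ * exp (-ψ ρ)) - K * ((radialMoment ν e d 1 a
      b ρ - c * radialMoment ν e d 0 a b ρ) * exp (-ψ ρ)) = radialMoment ν e d 0 a b ρ *
      exp (-ψ ρ) * (ρ * axialVariance ν e (a * ρ) 0 * φ ρ +
        (φ ρ * axialMean ν e (a * ρ) 0 - K) * (ρ * axialMean ν e (a * ρ) 0 - c)) := fun ρ => by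
    linear_combination exp (-ψ ρ) *
      radialFlux_mul_sub_eq (a := a) (b := b) (c := c) hsphere (φ ρ) K
  have hpos : 0 < ∫ ρ in Ioi 0, radialFlux ν e d a b c ρ * (φ ρ * exp (-ψ ρ)) - K *
      ((radialMoment ν e d 1 a b ρ - c * radialMoment ν e d 0 a b ρ) * exp (-ψ ρ)) := by
    refine setIntegral_Ioi_zero_pos (x₁ := ρ₁) (hflux.sub (hcenter.const_mul K))
      (fun ρ hρ => ?_) fun ρ hρ hρρ₁ => ?_
    · rw [hdecomp]
      exact mul_nonneg (hweight ρ hρ).le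
        (add_nonneg (mul_nonneg (hvar ρ hρ).le (hφ ρ)) (hchebyshev ρ hρ))
    · rw [hdecomp]
      exact mul_pos (hweight ρ hρ) (add_pos_of_pos_of_nonneg
        (mul_pos (hvar ρ hρ) (hρ₁.trans_le (hφmono hρρ₁.le))) (hchebyshev ρ hρ))
  rwa [integral_sub hflux (hcenter.const_mul K), integral_const_mul, hcenter_zero, mul_zero,
    sub_zero] at hpos

theorem axialMean_gibbsMeasure_pos (hψ : Monotone ψ) (hd : finrank ℝ E = d + 1) (he : ‖e‖ = 1)
    (ha : 0 < a) (hb : 0 < b) : 0 < axialMean (gibbsMeasure E ψ) e a b := by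
  have : Nontrivial E := nontrivial_of_finrank_pos (R := ℝ) (hd ▸ d.succ_pos)
  have := neZero_gibbsMeasure (E := E) hψ.measurable
  refine div_pos ?_ (tiltableAt_gibbsMeasure hψ _ hb).axialMoment_zero_pos
  obtain ⟨hint, heq⟩ := integrableOn_radialMoment_and_axialMoment_eq hd hψ e 1 a hb
  have hpos : ∀ ρ > 0, 0 < radialMoment (sphereMeasure E) e d 1 a b ρ * exp (-ψ ρ) :=
    fun ρ hρ => by
      have hmean := isRotationInvariant_sphereMeasure.axialMean_sphere_pos
        ae_sphereMeasure_norm_eq_one he (mul_pos ha hρ)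
      have hmoment := axialMoment_sphere_zero_pos (e := e)
        (ae_sphereMeasure_norm_eq_one (E := E)) (a * ρ)
      rw [radialMoment, (tiltableAt_of_ae_norm_eq_one ae_sphereMeasure_norm_eq_one
        _).axialMoment_one_eq]
      positivity
  rw [heq]
  exact setIntegral_Ioi_zero_pos (x₁ := 0) hint (fun ρ hρ => (hpos ρ hρ).le) fun ρ hρ _ => hpos ρ hρ

theorem integrableOn_and_integral_radialMoment_sub (hψ : Monotone ψ) (hd : finrank ℝ E = d + 1)
    (hb : 0 < b) (k : ℕ) (c : ℝ) :
    IntegrableOn (fun ρ => (radialMoment (sphereMeasure E) e d (k + 1) a b ρ -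
        c * radialMoment (sphereMeasure E) e d k a b ρ) * exp (-ψ ρ)) (Ioi 0) ∧
      ∫ ρ in Ioi 0, (radialMoment (sphereMeasure E) e d (k + 1) a b ρ -
        c * radialMoment (sphereMeasure E) e d k a b ρ) * exp (-ψ ρ) =
      axialMoment (gibbsMeasure E ψ) e (k + 1) a b -
        c * axialMoment (gibbsMeasure E ψ) e k a b := by
  obtain ⟨hint, heq⟩ := integrableOn_radialMoment_and_axialMoment_eq hd hψ e k a hb
  obtain ⟨hint', heq'⟩ := integrableOn_radialMoment_and_axialMoment_eq hd hψ e (k + 1) a hb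
  simp only [sub_mul, mul_assoc]
  rw [integral_sub hint' (hint.const_mul c), integral_const_mul, ← heq, ← heq']
  exact ⟨hint'.sub (hint.const_mul c), rfl⟩

theorem integrableOn_and_integral_deriv_radialFlux (hψ : Monotone ψ) (hd : finrank ℝ E = d + 1)
    (he : ‖e‖ = 1) (ha : a ≠ 0) (hb : 0 < b) (hc : c = axialMean (gibbsMeasure E ψ) e a b) :
    IntegrableOn (fun ρ => deriv (radialFlux (sphereMeasure E) e d a b c) ρ * exp (-ψ ρ))
        (Ioi 0) ∧
      ∫ ρ in Ioi 0, deriv (radialFlux (sphereMeasure E) e d a b c) ρ * exp (-ψ ρ) =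
        axialMoment (gibbsMeasure E ψ) e 0 a b *
          (1 - 2 * b * axialVariance (gibbsMeasure E ψ) e a b) := by
  have := neZero_gibbsMeasure (E := E) hψ.measurable
  have htilt : TiltableAt (gibbsMeasure E ψ) (a • e, b) := tiltableAt_gibbsMeasure hψ _ hb
  obtain ⟨hint₀, heq₀⟩ := integrableOn_radialMoment_and_axialMoment_eq hd hψ e 0 a hb
  obtain ⟨hint₁, heq₁⟩ :=
    integrableOn_and_integral_radialMoment_sub (e := e) (a := a) hψ hd hb 0 c
  obtain ⟨hint₂, heq₂⟩ :=
    integrableOn_and_integral_radialMoment_sub (e := e) (a := a) hψ hd hb 1 c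
  have hderiv : ∀ ρ ∈ Ioi (0 : ℝ),
      deriv (radialFlux (sphereMeasure E) e d a b c) ρ * exp (-ψ ρ) =
        radialMoment (sphereMeasure E) e d 0 a b ρ * exp (-ψ ρ) +
        a * ((radialMoment (sphereMeasure E) e d (0 + 1) a b ρ -
          c * radialMoment (sphereMeasure E) e d 0 a b ρ) * exp (-ψ ρ)) -
        2 * b * ((radialMoment (sphereMeasure E) e d (1 + 1) a b ρ -
          c * radialMoment (sphereMeasure E) e d 1 a b ρ) * exp (-ψ ρ)) := fun ρ hρ => by
    rw [(isRotationInvariant_sphereMeasure.hasDerivAt_radialFlux ae_sphereMeasure_norm_eq_one he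
      hd ha (ne_of_gt hρ)).deriv]
    ring
  have hsum := hint₀.add (hint₁.const_mul a)
  refine ⟨(hsum.sub (hint₂.const_mul (2 * b))).congr_fun (fun ρ hρ => (hderiv ρ hρ).symm)
    measurableSet_Ioi, ?_⟩
  rw [setIntegral_congr_fun measurableSet_Ioi hderiv]
  refine (integral_sub' hsum (hint₂.const_mul (2 * b))).trans ?_
  rw [integral_add' hint₀ (hint₁.const_mul a), integral_const_mul, integral_const_mul, ← heq₀,
    heq₁, heq₂, zero_add, htilt.axialMoment_one_eq, one_add_one_eq_two, htilt.axialMoment_two_eq,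
    hc]
  ring

theorem axialVariance_gibbsMeasure_lt (hconv : ConvexOn ℝ univ ψ) (hmono : Monotone ψ)
    (htop : Tendsto ψ atTop atTop) (hd : finrank ℝ E = d + 1) (he : ‖e‖ = 1) (ha : 0 < a)
    (hb : 0 < b) : axialVariance (gibbsMeasure E ψ) e a b < 1 / (2 * b) := by
  have : Nontrivial E := nontrivial_of_finrank_pos (R := ℝ) (hd ▸ d.succ_pos)
  have := neZero_gibbsMeasure (E := E) hmono.measurable
  have hsphere := ae_sphereMeasure_norm_eq_one (E := E)
  have hrot := isRotationInvariant_sphereMeasure (E := E)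
  have htilt : TiltableAt (gibbsMeasure E ψ) (a • e, b) := tiltableAt_gibbsMeasure hmono _ hb
  obtain ⟨φ, hφmono, hφ, hφpos, hφderiv⟩ := exists_monotone_hasDerivWithinAt_Ioi hconv hmono htop
  obtain ⟨hderiv, hderiv_eq⟩ :=
    integrableOn_and_integral_deriv_radialFlux hmono hd he ha.ne' hb rfl
  obtain ⟨hcenter, hcenter_eq⟩ := integrableOn_and_integral_radialMoment_sub (e := e) (a := a)
    hmono hd hb 0 (axialMean (gibbsMeasure E ψ) e a b)
  rw [zero_add, htilt.axialMoment_one_eq, sub_self] at hcenter_eq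
  obtain ⟨hflux, hparts⟩ := integrableOn_and_integral_deriv_mul_exp_neg
    (continuous_radialFlux hsphere) (fun ρ hρ => (hrot.hasDerivAt_radialFlux hsphere he hd ha.ne'
      (ne_of_gt hρ)).differentiableAt.hasDerivAt) (tendsto_radialFlux hsphere he hb)
    hrot.radialFlux_zero (continuousOn_univ.1 (hconv.continuousOn isOpen_univ)) hφ hφderiv htop
    hderiv
  have hpos := hrot.integral_radialFlux_mul_pos hsphere he ha
    (axialMean_gibbsMeasure_pos hmono hd he ha hb) hφmono hφ hφpos hflux hcenter hcenter_eq
  rw [← hparts, hderiv_eq] at hpos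
  have hgap := pos_of_mul_pos_right hpos htilt.axialMoment_zero_pos.le
  rw [lt_div_iff₀ (by positivity)]
  linarith

end VarianceBound

section Superlinear

open Module

variable {f f' ψ : ℝ → ℝ} {M : ℝ}

theorem exists_pos_deriv_eq_of_tendsto_div (hderiv : ∀ x > 0, HasDerivAt f (f' x) x)
    (hcont : Continuous f') (hzero : f' 0 = 0) (hsuper : Tendsto (fun x => f x / x) atTop atTop)
    {r : ℝ} (hr : 0 < r) : ∃ x > 0, f' x = r := by
  obtain ⟨x, hslope, hx⟩ :=
    ((hsuper.eventually_gt_atTop (r + |f 1|)).and (eventually_gt_atTop 1)).exists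
  have hx₀ : 0 < x := zero_lt_one.trans hx
  have hgrowth : r * (x - 1) < f x - f 1 := by
    have hfx := (lt_div_iff₀ hx₀).1 hslope
    nlinarith [le_abs_self (f 1), mul_nonneg (abs_nonneg (f 1)) (sub_nonneg.2 hx.le)]
  obtain ⟨y, hy, hfy⟩ := exists_hasDerivAt_eq_slope f f' hx
    (fun z hz => (hderiv z (zero_lt_one.trans_le hz.1)).continuousAt.continuousWithinAt)
    fun z hz => hderiv z (zero_lt_one.trans hz.1)
  have hy₀ : 0 < y := zero_lt_one.trans hy.1
  have hry : r < f' y := hfy ▸ (lt_div_iff₀ (sub_pos.2 hx)).2 hgrowth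
  obtain ⟨z, hz, hfz⟩ := intermediate_value_Icc hy₀.le hcont.continuousOn
    ⟨hzero.trans_le hr.le, hry.le⟩
  refine ⟨z, hz.1.lt_of_ne' ?_, hfz⟩
  rintro rfl
  exact hr.ne (hzero.symm.trans hfz)

theorem exists_forall_mul_sub_le_of_tendsto_div (hmono : MonotoneOn ψ (Ici 0))
    (hsuper : Tendsto (fun x => ψ x / x) atTop atTop) (hM : 0 ≤ M) :
    ∃ C, ∀ x ≥ 0, M * x - C ≤ ψ x := by
  obtain ⟨R, hR⟩ := eventually_atTop.1
    ((hsuper.eventually_ge_atTop M).and (eventually_gt_atTop 0))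
  refine ⟨|M * R - ψ 0|, fun x hx => ?_⟩
  rcases le_total R x with hRx | hxR
  · have hψx := (le_div_iff₀ (hR x hRx).2).1 (hR x hRx).1
    linarith [abs_nonneg (M * R - ψ 0)]
  · have hψx : ψ 0 ≤ ψ x := hmono self_mem_Ici hx hx
    linarith [le_abs_self (M * R - ψ 0), mul_le_mul_of_nonneg_left hxR hM]

theorem tendsto_div_atTop_of_forall_mul_sub_le (h : ∀ M ≥ 0, ∃ C, ∀ x ≥ 0, M * x - C ≤ f x) :
    Tendsto (fun x => f x / x) atTop atTop := by
  refine tendsto_atTop.2 fun B => ?_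
  obtain ⟨C, hC⟩ := h (|B| + 1) (by positivity)
  filter_upwards [eventually_gt_atTop 0, eventually_ge_atTop C] with x hx hCx
  rw [le_div_iff₀ hx]
  linarith [hC x hx.le, mul_le_mul_of_nonneg_right (le_abs_self B) hx.le]

theorem tendsto_atTop_of_tendsto_div (hsuper : Tendsto (fun x => ψ x / x) atTop atTop) :
    Tendsto ψ atTop atTop := by
  refine (hsuper.atTop_mul_atTop₀ tendsto_id).congr' ?_
  filter_upwards [eventually_ne_atTop 0] with x hx using div_mul_cancel₀ _ hx

variable {E : Type*} [NormedAddCommGroup E] [InnerProductSpace ℝ E] [MeasurableSpace E]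
  [BorelSpace E] [FiniteDimensional ℝ E] {e : E} {b t C : ℝ}

theorem integrable_and_integral_exp_inner_sub_norm_sq (he : ‖e‖ = 1) (a : ℝ) (hb : 0 < b) :
    Integrable (fun y : E => exp (a * ⟪y, e⟫ - b * ‖y‖ ^ 2)) ∧
      ∫ y : E, exp (a * ⟪y, e⟫ - b * ‖y‖ ^ 2) =
        exp (a ^ 2 / (4 * b)) * (π / b) ^ (finrank ℝ E / 2 : ℝ) := by
  have hsquare : ∀ y : E, exp (a * ⟪y, e⟫ - b * ‖y‖ ^ 2) =
      exp (a ^ 2 / (4 * b)) * exp (-b * ‖y - (a / (2 * b)) • e‖ ^ 2) := fun y => by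
    rw [← exp_add, norm_sub_sq_real, real_inner_smul_right, norm_smul, he, mul_one, norm_eq_abs,
      sq_abs]
    congr 1
    field_simp
    ring
  have hgauss := GaussianFourier.integral_rexp_neg_mul_sq_norm (V := E) hb
  have hint : Integrable fun y : E => exp (-b * ‖y‖ ^ 2) :=
    .of_integral_ne_zero (hgauss ▸ by positivity)
  simp only [hsquare]
  refine ⟨(hint.comp_sub_right _).const_mul _, ?_⟩
  rw [integral_const_mul, integral_sub_right_eq_self (fun y : E => exp (-b * ‖y‖ ^ 2)), hgauss]

theorem axialMoment_gibbsMeasure_zero_le (hψ : Monotone ψ) (hM : 0 ≤ M)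
    (hlower : ∀ x ≥ 0, M * x - C ≤ ψ x) (he : ‖e‖ = 1) (a : ℝ) (hb : 0 < b) :
    axialMoment (gibbsMeasure E ψ) e 0 a b ≤
      exp (C + (a - M) ^ 2 / (4 * b)) * (π / b) ^ (finrank ℝ E / 2 : ℝ) := by
  obtain ⟨hint, heq⟩ := integrable_and_integral_exp_inner_sub_norm_sq he (a - M) hb
  rw [exp_add, mul_assoc, ← heq, axialMoment, integral_gibbsMeasure hψ.measurable,
    ← integral_const_mul]
  refine integral_mono ((integrable_gibbsMeasure_iff hψ.measurable).1
    ((tiltableAt_gibbsMeasure hψ _ hb).integrable_axial 0)) (hint.const_mul _) fun y => ?_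
  have hinner : ⟪y, e⟫ ≤ ‖y‖ := (real_inner_le_norm y e).trans_eq (by rw [he, mul_one])
  simp only [pow_zero, mul_one, ← exp_add]
  exact exp_le_exp.2 (by linarith [hlower _ (norm_nonneg y), mul_le_mul_of_nonneg_left hinner hM])

theorem mul_sub_le_heatPotential_gibbsMeasure (hψ : Monotone ψ) (hM : 0 ≤ M)
    (hlower : ∀ x ≥ 0, M * x - C ≤ ψ x) (he : ‖e‖ = 1) (ht : 0 < t) (s : ℝ) :
    M * s - (C + t * M ^ 2) ≤ heatPotential (gibbsMeasure E ψ) e t s := by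
  have := neZero_gibbsMeasure (E := E) hψ.measurable
  have hb : 0 < 1 / (4 * t) := by positivity
  have hlog := log_le_log (tiltableAt_gibbsMeasure hψ _ hb).axialMoment_zero_pos
    (axialMoment_gibbsMeasure_zero_le hψ hM hlower he (s / (2 * t)) hb)
  have hscale : π / (1 / (4 * t)) = 4 * π * t := by
    field_simp
  rw [hscale, log_mul (exp_ne_zero _) (by positivity), log_exp, log_rpow (by positivity)] at hlog
  have hsquare : (s / (2 * t) - M) ^ 2 / (4 * (1 / (4 * t))) =
      s ^ 2 / (4 * t) - M * s + t * M ^ 2 := by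
    field_simp
    ring
  rw [heatPotential]
  linarith

theorem tendsto_heatPotential_gibbsMeasure_div (hmono : Monotone ψ)
    (hsuper : Tendsto (fun x => ψ x / x) atTop atTop) (he : ‖e‖ = 1) (ht : 0 < t) :
    Tendsto (fun s => heatPotential (gibbsMeasure E ψ) e t s / s) atTop atTop :=
  tendsto_div_atTop_of_forall_mul_sub_le fun M hM =>
    have ⟨C, hC⟩ := exists_forall_mul_sub_le_of_tendsto_div (hmono.monotoneOn _) hsuper hM
    ⟨C + t * M ^ 2, fun s _ => mul_sub_le_heatPotential_gibbsMeasure hmono hM hC he ht s⟩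

theorem exists_pos_heatSlope_gibbsMeasure_eq (hmono : Monotone ψ)
    (hsuper : Tendsto (fun x => ψ x / x) atTop atTop) (he : ‖e‖ = 1) (ht : 0 < t) {r : ℝ}
    (hr : 0 < r) : ∃ s > 0, heatSlope (gibbsMeasure E ψ) e t s = r := by
  have := neZero_gibbsMeasure (E := E) hmono.measurable
  have htilt : ∀ s : ℝ, TiltableAt (gibbsMeasure E ψ) ((s / (2 * t)) • e, 1 / (4 * t)) :=
    fun s => tiltableAt_gibbsMeasure hmono _ (by positivity)
  have hrot := isRotationInvariant_gibbsMeasure (E := E) (ψ := ψ)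
  refine exists_pos_deriv_eq_of_tendsto_div (fun s hs => hasDerivAt_of_hasStrictFDerivAt_prod
      (hrot.hasStrictFDerivAt_heatPotential he (htilt s) ht hs))
    (continuous_iff_continuousAt.2 fun s => (hasDerivAt_heatSlope (htilt s)).continuousAt) ?_
    (tendsto_heatPotential_gibbsMeasure_div hmono hsuper he ht) hr
  rw [heatSlope, zero_div, axialMean, hrot.axialMoment_one_zero, zero_div, sub_zero, zero_div]

end Superlinear

section LegendreEvolution

open Module

section Gibbs

variable {E : Type*} [NormedAddCommGroup E] [InnerProductSpace ℝ E] [MeasurableSpace E]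
  [BorelSpace E] [FiniteDimensional ℝ E] [Nontrivial E] {ψ : ℝ → ℝ} {e : E} {t s : ℝ}

theorem heatCurvature_gibbsMeasure_pos (hconv : ConvexOn ℝ univ ψ) (hmono : Monotone ψ)
    (htop : Tendsto ψ atTop atTop) (he : ‖e‖ = 1) (ht : 0 < t) (hs : 0 < s) :
    0 < heatCurvature (gibbsMeasure E ψ) e t s := by
  obtain ⟨d, hd⟩ := Nat.exists_eq_add_one_of_ne_zero (finrank_pos (R := ℝ) (M := E)).ne'
  have hvar := axialVariance_gibbsMeasure_lt hconv hmono htop hd he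
    (show 0 < s / (2 * t) by positivity) (show 0 < 1 / (4 * t) by positivity)
  rw [heatCurvature, sub_pos, div_lt_iff₀ (by positivity)]
  refine hvar.trans_eq ?_
  field_simp

theorem isStrictlyConvexEvolution_heatPotential_gibbsMeasure (hconv : ConvexOn ℝ univ ψ)
    (hmono : Monotone ψ) (hsuper : Tendsto (fun x => ψ x / x) atTop atTop) (he : ‖e‖ = 1) :
    IsStrictlyConvexEvolution (heatPotential (gibbsMeasure E ψ) e)
      (fun t s => -heatSlope (gibbsMeasure E ψ) e t s ^ 2 +
        heatCurvature (gibbsMeasure E ψ) e t s +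
          (finrank ℝ E - 1) * heatSlope (gibbsMeasure E ψ) e t s / s)
      (heatSlope (gibbsMeasure E ψ) e) (heatCurvature (gibbsMeasure E ψ) e) :=
  have := neZero_gibbsMeasure (E := E) hmono.measurable
  have htilt : ∀ t > 0, ∀ s : ℝ, TiltableAt (gibbsMeasure E ψ) ((s / (2 * t)) • e, 1 / (4 * t)) :=
    fun t ht s => tiltableAt_gibbsMeasure hmono _ (by positivity)
  { hasStrictFDerivAt := fun t ht s hs =>
      isRotationInvariant_gibbsMeasure.hasStrictFDerivAt_heatPotential he (htilt t ht s) ht hs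
    hasDerivAt_slope := fun t ht s _ => hasDerivAt_heatSlope (htilt t ht s)
    continuousAt_slope := fun t ht s _ => continuousAt_heatSlope_time ht (htilt t ht s)
    curvature_pos := fun _ ht _ hs => heatCurvature_gibbsMeasure_pos hconv hmono
      (tendsto_atTop_of_tendsto_div hsuper) he ht hs
    exists_slope_eq := fun _ ht _ hr => exists_pos_heatSlope_gibbsMeasure_eq hmono hsuper he ht hr }

end Gibbs

theorem convexOn_comp_max_zero {f : ℝ → ℝ} (hconv : ConvexOn ℝ (Ici 0) f)
    (hmono : MonotoneOn f (Ici 0)) : ConvexOn ℝ univ fun x => f (max 0 x) := by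
  have himage : (fun x : ℝ => max 0 x) '' univ = Ici 0 := by
    rw [image_univ]
    exact Subset.antisymm (range_subset_iff.2 fun x => le_max_left 0 x)
      fun x hx => ⟨x, max_eq_right hx⟩
  exact ConvexOn.comp (himage ▸ hconv)
    ((convexOn_const 0 convex_univ).sup (convexOn_id convex_univ)) (himage ▸ hmono)

theorem monotone_comp_max_zero {f : ℝ → ℝ} (hmono : MonotoneOn f (Ici 0)) :
    Monotone fun x => f (max 0 x) := fun _ _ hxy =>
  hmono (mem_Ici.2 (le_max_left _ _)) (mem_Ici.2 (le_max_left _ _)) (max_le_max_left 0 hxy)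

theorem tendsto_comp_max_zero_div {f : ℝ → ℝ} {l : Filter ℝ}
    (h : Tendsto (fun x => f x / x) atTop l) : Tendsto (fun x => f (max 0 x) / x) atTop l := by
  refine h.congr' ?_
  filter_upwards [eventually_ge_atTop 0] with x hx
  rw [max_eq_right hx]

variable {n : ℕ} [NeZero n] {Ψ ψ : ℝ → ℝ} {t : ℝ}

theorem besselSemigroup_exp_neg_eq (hψ : Measurable ψ) (h : EqOn Ψ ψ (Ici 0)) (t r : ℝ) :
    besselSemigroup n t (fun s => exp (-Ψ s)) r =
      exp (-(r ^ 2 / (4 * t))) / (4 * π * t) ^ (n / 2 : ℝ) *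
        axialMoment (gibbsMeasure (EuclideanSpace ℝ (Fin n)) ψ) (EuclideanSpace.single 0 1) 0
          (r / (2 * t)) (1 / (4 * t)) := by
  rw [besselSemigroup, axialMoment, integral_gibbsMeasure hψ, ← integral_const_mul]
  refine integral_congr_ae (.of_forall fun y => ?_)
  have hkernel : exp (-‖EuclideanSpace.single (0 : Fin n) r - y‖ ^ 2 / (4 * t)) =
      exp (-(r ^ 2 / (4 * t))) *
        exp (r / (2 * t) * ⟪y, EuclideanSpace.single 0 1⟫ - 1 / (4 * t) * ‖y‖ ^ 2) := by
    rw [← exp_add, norm_sub_sq_real, PiLp.norm_single, norm_eq_abs, sq_abs,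
      EuclideanSpace.inner_single_left, EuclideanSpace.inner_single_right]
    congr 1
    simp only [conj_trivial, one_mul]
    ring
  beta_reduce
  rw [hkernel, h (norm_nonneg y), pow_zero, mul_one]
  ring

theorem evolvedPotential_eq_heatPotential (hψ : Monotone ψ) (h : EqOn Ψ ψ (Ici 0)) (ht : 0 < t) :
    evolvedPotential n Ψ t =
      heatPotential (gibbsMeasure (EuclideanSpace ℝ (Fin n)) ψ) (EuclideanSpace.single 0 1) t := by
  ext s
  have := neZero_gibbsMeasure (E := EuclideanSpace ℝ (Fin n)) hψ.measurable
  have hpos := (tiltableAt_gibbsMeasure hψ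
    ((s / (2 * t)) • EuclideanSpace.single (0 : Fin n) (1 : ℝ))
    (show 0 < 1 / (4 * t) by positivity)).axialMoment_zero_pos
  rw [evolvedPotential, besselSemigroup_exp_neg_eq hψ.measurable h, heatPotential,
    log_mul (by positivity) hpos.ne', log_div (exp_ne_zero _) (by positivity), log_exp,
    log_rpow (by positivity), finrank_euclideanSpace_fin]
  ring

end LegendreEvolution

theorem legendre_evolution_equation_general (n : ℕ) [NeZero n] (Ψ : ℝ → ℝ)
    (hconv : ConvexOn ℝ (Ici 0) Ψ) (hmono : MonotoneOn Ψ (Ici 0))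
    (hsuper : Tendsto (fun x => Ψ x / x) atTop atTop) :
    ∀ t > (0 : ℝ), ∀ r > (0 : ℝ),
      deriv (fun τ => legendreEvolved n Ψ τ r) t =
        - 1 / deriv (deriv (fun s => legendreEvolved n Ψ t s)) r + r ^ 2 -
          (n - 1 : ℝ) * r / deriv (fun s => legendreEvolved n Ψ t s) r := by
  intro t ht r hr
  have hmono_ext := monotone_comp_max_zero hmono
  have hevolution := isStrictlyConvexEvolution_heatPotential_gibbsMeasure
    (e := EuclideanSpace.single (0 : Fin n) (1 : ℝ)) (convexOn_comp_max_zero hconv hmono) hmono_ext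
    (tendsto_comp_max_zero_div hsuper) (by simp)
  have hlegendre : ∀ τ > 0, legendreEvolved n Ψ τ = legendreTransform (heatPotential
      (gibbsMeasure (EuclideanSpace ℝ (Fin n)) fun x => Ψ (max 0 x)) (.single 0 1) τ) :=
    fun τ hτ => congrArg legendreTransform <| evolvedPotential_eq_heatPotential hmono_ext
      (fun x hx => congrArg Ψ (max_eq_right hx).symm) hτ
  have htime := (lt_mem_nhds ht).mono fun τ hτ => congrFun (hlegendre τ hτ) r
  rw [EventuallyEq.deriv_eq htime, hlegendre t ht]
  exact hevolution.legendreTransform_evolution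
    (fun _ _ _ _ => by rw [finrank_euclideanSpace_fin]) ht hr

theorem legendre_evolution_equation (n : ℕ) [NeZero n] (Ψ : ℝ → ℝ)
    (hconv : ConvexOn ℝ (Set.Ici 0) Ψ) (hmono : MonotoneOn Ψ (Set.Ici 0))
    (h0 : Ψ 0 = 0) (hnonneg : ∀ r ∈ Set.Ici (0 : ℝ), 0 ≤ Ψ r)
    (hsuper : Tendsto (fun x => Ψ x / x) atTop atTop) :
    ∀ t > (0 : ℝ), ∀ r > (0 : ℝ),
      deriv (fun τ => legendreEvolved n Ψ τ r) t =
        - 1 / deriv (deriv (fun s => legendreEvolved n Ψ t s)) r + r ^ 2 -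
          (n - 1 : ℝ) * r / deriv (fun s => legendreEvolved n Ψ t s) r :=
  legendre_evolution_equation_general n Ψ hconv hmono hsuper
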